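/- Let ℓ be a fixed nonnegative integer. If K_n ≥ 2 for all sufficiently large n, P_n = Ω(n), K_n/P_n = o(1), and the sequence β_{ℓ,n} := n·p_e − ln n − ℓ·ln ln n satisfies β_{ℓ,n} = o(ln n) and lim_{n→∞} β_{ℓ,n} = +∞, then the vertex connectivity κ of 𝔾_on(n,K_n,P_n,p_n) satisfies P[κ = ℓ] → 0 as n → ∞. -/

import Mathlib

open MeasureTheory Filter Asymptotics
open scoped ENNReal

noncomputable section

/-- Key rings: `K`-element subsets of a key pool of size `P`. -/
abbrev KeyRing (P K : ℕ) : Type := {s : Finset (Fin P) // s.card = K}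

instance (P K : ℕ) : MeasurableSpace (KeyRing P K) := ⊤

/-- The uniform probability measure on key rings. -/
def uniformKeyMeasure (P K : ℕ) : Measure (KeyRing P K) :=
  (Fintype.card (KeyRing P K) : ℝ≥0∞)⁻¹ • (Measure.count : Measure (KeyRing P K))

/-- The Bernoulli measure with parameter `p` on `Bool`. -/
def bern (p : ℝ) : Measure Bool :=
  ENNReal.ofReal p • Measure.dirac true + ENNReal.ofReal (1 - p) • Measure.dirac false

/-- Sample space underlying `𝔾_on(n, K, P, p)`: independent key rings for the `n`
nodes together with independent on/off channel states for each pair of nodes. -/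
abbrev GonSpace (n K P : ℕ) : Type :=
  (Fin n → KeyRing P K) × (Sym2 (Fin n) → Bool)

/-- The probability measure of the model `𝔾_on(n, K, P, p)`: the key rings of the
`n` nodes are independent and uniform, and the channels are independent
Bernoulli(`p`) variables, independent of the key rings. -/
def gonMeasure (n K P : ℕ) (p : ℝ) : Measure (GonSpace n K P) :=
  (Measure.pi fun _ : Fin n => uniformKeyMeasure P K).prod
    (Measure.pi fun _ : Sym2 (Fin n) => bern p)

/-- The random graph `𝔾_on`: an edge is present iff the key rings intersect and the
channel between the two nodes is on. -/
def gonGraph {n K P : ℕ} (ω : GonSpace n K P) : SimpleGraph (Fin n) where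
  Adj i j := i ≠ j ∧ ((ω.1 i).1 ∩ (ω.1 j).1).Nonempty ∧ ω.2 s(i, j) = true
  symm := by
    constructor
    rintro i j ⟨h1, h2, h3⟩
    exact ⟨h1.symm, by rwa [Finset.inter_comm], by rwa [Sym2.eq_swap]⟩
  loopless := ⟨fun i h => h.1 rfl⟩

/-- The random key graph `G(n, K, P)`: an edge is present iff the key rings intersect. -/
def rkgGraph {n K P : ℕ} (ω : Fin n → KeyRing P K) : SimpleGraph (Fin n) where
  Adj i j := i ≠ j ∧ ((ω i).1 ∩ (ω j).1).Nonempty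
  symm := by
    constructor
    rintro i j ⟨h1, h2⟩
    exact ⟨h1.symm, by rwa [Finset.inter_comm]⟩
  loopless := ⟨fun i h => h.1 rfl⟩

/-- The probability measure of the random key graph model. -/
def rkgMeasure (n K P : ℕ) : Measure (Fin n → KeyRing P K) :=
  Measure.pi fun _ : Fin n => uniformKeyMeasure P K

/-- Degree of a vertex. -/
def gDeg {V : Type*} (G : SimpleGraph V) (v : V) : ℕ := Nat.card {w // G.Adj v w}

/-- Minimum vertex degree. -/
def minDeg {V : Type*} (G : SimpleGraph V) : ℕ := sInf (Set.range (gDeg G))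

/-- A graph is `k`-connected if it remains connected after the removal of any
`k - 1` of its vertices. -/
def KConnected {V : Type*} (G : SimpleGraph V) (k : ℕ) : Prop :=
  ∀ S : Finset V, S.card ≤ k - 1 → (G.induce ((S : Set V)ᶜ)).Connected

/-- Vertex connectivity: the least number of vertices whose deletion disconnects
the graph. -/
def vertexConn {V : Type*} (G : SimpleGraph V) : ℕ :=
  sInf {m | ∃ S : Finset V, S.card = m ∧ ¬ (G.induce ((S : Set V)ᶜ)).Connected}

/-- `p_s`: the probability that two key rings share at least one key. -/
def psf (K P : ℕ) : ℝ :=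
  if 2 * K ≤ P then 1 - (Nat.choose (P - K) K : ℝ) / (Nat.choose P K : ℝ) else 1

/-- `p_e = p · p_s`: the probability of an edge in `𝔾_on`. -/
def pef (K P : ℕ) (p : ℝ) : ℝ := p * psf K P

/-- The event `D_{x,ℓ}` that the node with index `x` has degree exactly `ℓ`. -/
def degEvent (n K P : ℕ) (x ℓ : ℕ) : Set (GonSpace n K P) :=
  {ω | ∃ hx : x < n, gDeg (gonGraph ω) ⟨x, hx⟩ = ℓ}

/-- The event `E_{xy}` that the edge between the nodes with indices `x`, `y` is present. -/
def edgeEvent (n K P : ℕ) (x y : ℕ) : Set (GonSpace n K P) :=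
  {ω | ∃ (hx : x < n) (hy : y < n), (gonGraph ω).Adj ⟨x, hx⟩ ⟨y, hy⟩}

/-- The event that the key rings of nodes `x` and `y` share exactly `u` keys. -/
def interCardEvent (n K P : ℕ) (x y u : ℕ) : Set (GonSpace n K P) :=
  {ω | ∃ (hx : x < n) (hy : y < n), ((ω.1 ⟨x, hx⟩).1 ∩ (ω.1 ⟨y, hy⟩).1).card = u}

/-- The event `K_{xy}` that the key rings of nodes `x` and `y` share at least one key. -/
def keyShareEvent (n K P : ℕ) (x y : ℕ) : Set (GonSpace n K P) :=
  {ω | ∃ (hx : x < n) (hy : y < n), ((ω.1 ⟨x, hx⟩).1 ∩ (ω.1 ⟨y, hy⟩).1).Nonempty}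

/-- `r_n = min(⌊P/K⌋, ⌊n/2⌋)`. -/
def rn (n K P : ℕ) : ℕ := min (P / K) (n / 2)

/-- The threshold array `J`. -/
def Jarr (n K P : ℕ) (ε lam mu : ℝ) (i : ℕ) : ℕ :=
  if i ≤ rn n K P then max ⌊(1 + ε) * (K : ℝ)⌋₊ ⌊lam * (K : ℝ) * (i : ℝ)⌋₊
  else ⌊mu * (P : ℝ)⌋₊

/-- The event `𝓔(J)`: some set `T` of at least two nodes has a union of key rings of
size at most `J_{|T|}`. -/
def EJ (n K P : ℕ) (ε lam mu : ℝ) : Set (GonSpace n K P) :=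
  {ω | ∃ T : Finset (Fin n), 2 ≤ T.card ∧
    (T.biUnion fun i => (ω.1 i).1).card ≤ Jarr n K P ε lam mu T.card}

/-!
If `vertexConn G ≤ ℓ`, then deleting at most `ℓ` vertices leaves a graph with a component of at most
half its size, so `G` has a nonempty set `T` of at most `n / 2` vertices that induces a connected
subgraph and has at most `ℓ` outer neighbours. A union bound over `T` shows that no such set is
likely to exist.

Fix the key rings of the vertices in `T`. Every other vertex, with its own random ring and channels,
independently has no neighbour in `T` with probability `noLinkProb`, so an exponential Markov
inequality for the number of outer neighbours bounds the probability that there are at most `ℓ` of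
them by `θ⁻¹ ^ ℓ * (θ + (1 - θ) * noLinkProb) ^ (n - r)`, where `r = T.card`. A union bound over
spanning trees, encoded by parent maps, gives connectedness the additional price
`(r * q) ^ (r - 1)`, where `q` is the edge probability. With high probability the rings in every set
that is not too large are nearly disjoint, whence `noLinkProb ≤ exp (-9 / 10 * r * q)` there; larger
sets are cut into blocks of bounded size.

Let `x = n * q`. Connectedness leaves about `n * x ^ r` sets of size `r` to be counted, and if
`2 ≤ r` then `exp (-9 / 10 * r * x)` beats this because `n ≤ exp x`. Single vertices contribute
`O(n * x ^ ℓ * exp (-x))`, which tends to `0` because `x - log n - ℓ * log log n` tends to infinity.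
-/

theorem integral_ite_one_zero {Ω : Type*} [MeasurableSpace Ω] [DiscreteMeasurableSpace Ω]
    (μ : Measure Ω) (q : Ω → Prop) [DecidablePred q] :
    ∫ x, (if q x then 1 else 0 : ℝ) ∂μ = μ.real {x | q x} := by
  rw [← integral_indicator_one .of_discrete]
  simp only [Set.indicator_apply, Set.mem_ofPred_eq, Pi.one_apply]

section ProductMeasure

variable {ι : Type*} [Fintype ι] {α : ι → Type*} [∀ i, MeasurableSpace (α i)]
  (μ : ∀ i, Measure (α i)) [∀ i, IsProbabilityMeasure (μ i)]

theorem measurePreserving_update [DecidableEq ι] (i : ι) :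
    MeasurePreserving (fun z : (∀ j, α j) × α i => Function.update z.1 i z.2)
      ((Measure.pi μ).prod (μ i)) (Measure.pi μ) := by
  have hmeas : Measurable fun z : (∀ j, α j) × α i => Function.update z.1 i z.2 :=
    measurable_update'.comp measurable_id
  refine ⟨hmeas, (Measure.pi_eq fun s hs => ?_).symm⟩
  have hpre : (fun z : (∀ j, α j) × α i => Function.update z.1 i z.2) ⁻¹' Set.univ.pi s =
      Set.univ.pi (Function.update s i Set.univ) ×ˢ s i := by
    ext z
    simp only [Set.mem_preimage, Set.mem_univ_pi, Set.mem_prod]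
    constructor
    · refine fun h => ⟨fun j => ?_, by simpa using h i⟩
      rcases eq_or_ne j i with rfl | hj
      · simp
      · simpa [hj] using h j
    · rintro ⟨h, hi⟩ j
      rcases eq_or_ne j i with rfl | hj
      · simpa using hi
      · simpa [hj] using h j
  rw [Measure.map_apply hmeas (.univ_pi hs), hpre, Measure.prod_prod, Measure.pi_pi,
    ← Finset.prod_erase_mul _ _ (Finset.mem_univ i),
    ← Finset.prod_erase_mul _ (fun j => μ j (s j)) (Finset.mem_univ i)]
  have hprod : ∏ j ∈ Finset.univ.erase i, μ j (Function.update s i Set.univ j) =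
      ∏ j ∈ Finset.univ.erase i, μ j (s j) :=
    Finset.prod_congr rfl fun j hj => by rw [Function.update_of_ne (Finset.ne_of_mem_erase hj)]
  simp [hprod]

theorem integral_pi_update [DecidableEq ι] (i : ι) {F : (∀ j, α j) → ℝ}
    (hF : Integrable F (Measure.pi μ)) :
    ∫ k, ∫ x, F (Function.update k i x) ∂μ i ∂Measure.pi μ = ∫ k, F k ∂Measure.pi μ := by
  have hmp := measurePreserving_update μ i
  rw [← integral_prod (fun z : (∀ j, α j) × α i => F (Function.update z.1 i z.2))
    (hmp.integrable_comp_of_integrable hF)]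
  have hF' := hF.aestronglyMeasurable
  rw [← hmp.map_eq] at hF'
  rw [← integral_map hmp.aemeasurable hF', hmp.map_eq]

variable [∀ i, Finite (α i)] [∀ i, MeasurableSingletonClass (α i)]

theorem integral_pi_mul_of_dependsOn {A B : Finset ι} (hAB : Disjoint A B)
    {F G : (∀ j, α j) → ℝ} (hF : DependsOn F A) (hG : DependsOn G B) :
    ∫ k, F k * G k ∂Measure.pi μ = (∫ k, F k ∂Measure.pi μ) * ∫ k, G k ∂Measure.pi μ := by
  obtain ⟨F', rfl⟩ := dependsOn_iff_exists_comp.1 hF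
  obtain ⟨G', rfl⟩ := dependsOn_iff_exists_comp.1 hG
  have hcoord := ProbabilityTheory.iIndepFun_pi (μ := μ) (X := fun _ => id)
    fun _ => aemeasurable_id
  have hind := (hcoord.indepFun_finset A B hAB fun i => measurable_pi_apply i).comp
    (.of_discrete : Measurable F') (.of_discrete : Measurable G')
  exact hind.integral_fun_mul_eq_mul_integral .of_discrete .of_discrete

theorem integral_pi_prod_of_dependsOn {κ : Type*} (s : Finset κ) {A : κ → Finset ι}
    (hA : (s : Set κ).PairwiseDisjoint A) {F : κ → (∀ j, α j) → ℝ}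
    (hF : ∀ u ∈ s, DependsOn (F u) (A u)) :
    ∫ k, ∏ u ∈ s, F u k ∂Measure.pi μ = ∏ u ∈ s, ∫ k, F u k ∂Measure.pi μ := by
  classical
  induction s using Finset.induction_on with
  | empty => simp
  | insert a s ha ih =>
    simp only [Finset.forall_mem_insert, Finset.coe_insert] at hF hA
    have hdisj : Disjoint (A a) (s.biUnion A) :=
      (Finset.disjoint_biUnion_right _ _ _).2 fun u hu =>
        hA (Set.mem_insert _ _) (Set.mem_insert_of_mem _ hu) fun h => ha (h ▸ hu)
    have hdep : DependsOn (fun k => ∏ u ∈ s, F u k) (s.biUnion A : Finset ι) := fun x y hxy =>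
      Finset.prod_congr rfl fun u hu => hF.2 u hu fun j hj =>
        hxy j (Finset.mem_biUnion.2 ⟨u, hu, hj⟩)
    simp only [Finset.prod_insert ha]
    rw [integral_pi_mul_of_dependsOn μ hdisj hF.1 hdep,
      ih (hA.subset (Set.subset_insert _ _)) hF.2]

variable [DecidableEq ι]

theorem integral_pi_mul_le_of_dependsOn {i : ι} {F G : (∀ j, α j) → ℝ} {b : ℝ}
    (hF₀ : ∀ k, 0 ≤ F k) (hF : DependsOn F {i}ᶜ)
    (hG : ∀ k, F k ≠ 0 → ∫ x, G (Function.update k i x) ∂μ i ≤ b) :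
    ∫ k, F k * G k ∂Measure.pi μ ≤ (∫ k, F k ∂Measure.pi μ) * b := by
  have hupd (k : ∀ j, α j) (x : α i) : F (Function.update k i x) = F k :=
    hF fun j hj => Function.update_of_ne hj _ _
  rw [← integral_pi_update μ i .of_finite, ← integral_mul_const]
  refine integral_mono .of_finite .of_finite fun k => ?_
  simp only [hupd, integral_const_mul]
  by_cases hk : F k = 0
  · simp [hk]
  · exact mul_le_mul_of_nonneg_left (hG k hk) (hF₀ k)

theorem integral_pi_mul_prod_le_of_dependsOn (S : Finset ι) {F : (∀ j, α j) → ℝ}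
    {g : ι → (∀ j, α j) → ℝ} {b : ι → ℝ} (hF₀ : ∀ k, 0 ≤ F k) (hF : DependsOn F (S : Set ι)ᶜ)
    (hg₀ : ∀ i ∈ S, ∀ k, 0 ≤ g i k) (hg : ∀ i ∈ S, DependsOn (g i) (insert i (S : Set ι)ᶜ))
    (hb₀ : ∀ i ∈ S, 0 ≤ b i)
    (hb : ∀ i ∈ S, ∀ k, F k ≠ 0 → ∫ x, g i (Function.update k i x) ∂μ i ≤ b i) :
    ∫ k, F k * ∏ i ∈ S, g i k ∂Measure.pi μ ≤ (∫ k, F k ∂Measure.pi μ) * ∏ i ∈ S, b i := by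
  induction S using Finset.induction_on with
  | empty => simp
  | insert a S ha ih =>
    simp only [Finset.forall_mem_insert, Finset.coe_insert] at hg₀ hg hb₀ hb hF
    have hsub : (insert a (S : Set ι))ᶜ ⊆ (S : Set ι)ᶜ :=
      Set.compl_subset_compl.2 (Set.subset_insert _ _)
    have hdep : DependsOn (fun k => F k * ∏ i ∈ S, g i k) {a}ᶜ := by
      refine fun x y hxy => congrArg₂ (· * ·) (hF fun j hj => hxy j ?_)
        (Finset.prod_congr rfl fun i hi => hg.2 i hi fun j hj => hxy j ?_)
      · rintro rfl
        exact hj (Set.mem_insert _ _)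
      · rintro rfl
        rcases hj with rfl | hj
        · exact ha hi
        · exact hj (Set.mem_insert _ _)
    calc ∫ k, F k * ∏ i ∈ insert a S, g i k ∂Measure.pi μ
        = ∫ k, (F k * ∏ i ∈ S, g i k) * g a k ∂Measure.pi μ := by
          simp only [Finset.prod_insert ha, mul_comm (g a _), mul_assoc]
      _ ≤ (∫ k, F k * ∏ i ∈ S, g i k ∂Measure.pi μ) * b a :=
          integral_pi_mul_le_of_dependsOn μ
            (fun k => mul_nonneg (hF₀ k) (Finset.prod_nonneg fun i hi => hg₀.2 i hi k)) hdep
            fun k hk => hb.1 k (left_ne_zero_of_mul hk)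
      _ ≤ ((∫ k, F k ∂Measure.pi μ) * ∏ i ∈ S, b i) * b a :=
          mul_le_mul_of_nonneg_right (ih (hF.mono hsub) hg₀.2
            (fun i hi => (hg.2 i hi).mono (Set.insert_subset_insert hsub)) hb₀.2 hb.2) hb₀.1
      _ = (∫ k, F k ∂Measure.pi μ) * ∏ i ∈ insert a S, b i := by
          rw [Finset.prod_insert ha, mul_assoc, mul_comm (b a)]

end ProductMeasure

section Bernoulli

variable {p : ℝ}

theorem isProbabilityMeasure_bern (hp₀ : 0 ≤ p) (hp₁ : p ≤ 1) : IsProbabilityMeasure (bern p) := by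
  refine ⟨?_⟩
  simp [bern, ← ENNReal.ofReal_add hp₀ (sub_nonneg.2 hp₁)]

theorem bern_singleton (p : ℝ) (b : Bool) :
    bern p {b} = ENNReal.ofReal (if b = true then p else 1 - p) := by
  cases b <;> simp [bern]

variable {ι : Type*} [Fintype ι]

theorem integral_pi_bern_forall_eq (hp₀ : 0 ≤ p) (hp₁ : p ≤ 1) (E : Finset ι) (b : Bool) :
    ∫ c, (if ∀ e ∈ E, c e = b then 1 else 0 : ℝ) ∂Measure.pi (fun _ : ι => bern p) =
      (if b = true then p else 1 - p) ^ E.card := by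
  have := isProbabilityMeasure_bern hp₀ hp₁
  have hset : {c : ι → Bool | ∀ e ∈ E, c e = b} = (E : Set ι).pi fun _ => {b} := by
    ext c
    simp [Set.mem_pi]
  have hb : 0 ≤ if b = true then p else 1 - p := by split_ifs <;> linarith
  rw [integral_ite_one_zero, hset, measureReal_def, Measure.pi_pi_finset]
  simp [bern_singleton, ENNReal.toReal_ofReal hb]

theorem integral_pi_bern_exists_eq_true (hp₀ : 0 ≤ p) (hp₁ : p ≤ 1) (E : Finset ι) (θ : ℝ) :
    ∫ c, (if ∃ e ∈ E, c e = true then θ else 1) ∂Measure.pi (fun _ : ι => bern p) =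
      θ + (1 - θ) * (1 - p) ^ E.card := by
  have := isProbabilityMeasure_bern hp₀ hp₁
  have hsplit (c : ι → Bool) : (if ∃ e ∈ E, c e = true then θ else 1) =
      θ + (1 - θ) * (if ∀ e ∈ E, c e = false then 1 else 0 : ℝ) := by
    by_cases h : ∃ e ∈ E, c e = true
    · have h' : ¬ ∀ e ∈ E, c e = false := by simpa using h
      simp only [if_pos h, if_neg h', mul_zero, add_zero]
    · have h' : ∀ e ∈ E, c e = false := by simpa using h
      simp only [if_neg h, if_pos h', mul_one, add_sub_cancel]
  simp only [hsplit]
  rw [integral_add .of_finite .of_finite, integral_const_mul, integral_pi_bern_forall_eq hp₀ hp₁]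
  simp

theorem integral_pi_bern_forall_mul_prod_exists (hp₀ : 0 ≤ p) (hp₁ : p ≤ 1) {κ : Type*}
    (S : Finset κ) {E₀ : Finset ι} {E : κ → Finset ι} (hE₀ : ∀ u ∈ S, Disjoint E₀ (E u))
    (hE : (S : Set κ).PairwiseDisjoint E) (θ : ℝ) :
    ∫ c, (if ∀ e ∈ E₀, c e = true then 1 else 0) *
        ∏ u ∈ S, (if ∃ e ∈ E u, c e = true then θ else 1) ∂Measure.pi (fun _ : ι => bern p) =
      p ^ E₀.card * ∏ u ∈ S, (θ + (1 - θ) * (1 - p) ^ (E u).card) := by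
  have := isProbabilityMeasure_bern hp₀ hp₁
  have hdep₀ : DependsOn (fun c : ι → Bool => (if ∀ e ∈ E₀, c e = true then 1 else 0 : ℝ)) E₀ :=
    fun c c' h => if_congr (forall₂_congr fun e he => by rw [h e he]) rfl rfl
  have hdep (u : κ) :
      DependsOn (fun c : ι → Bool => if ∃ e ∈ E u, c e = true then θ else 1) (E u) :=
    fun c c' h => if_congr (exists_congr fun e => and_congr_right fun he => by rw [h e he]) rfl rfl
  classical
  refine (integral_pi_mul_of_dependsOn (fun _ => bern p)
    ((Finset.disjoint_biUnion_right E₀ S E).2 hE₀) hdep₀ fun c c' h => Finset.prod_congr rfl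
      fun u hu => hdep u fun e he => h e (Finset.mem_biUnion.2 ⟨u, hu, he⟩)).trans ?_
  rw [integral_pi_prod_of_dependsOn _ S hE fun u _ => hdep u, integral_pi_bern_forall_eq hp₀ hp₁]
  simp only [integral_pi_bern_exists_eq_true hp₀ hp₁, if_true]

end Bernoulli

section UniformKeyRing

variable {P K : ℕ}

theorem card_keyRing (P K : ℕ) : Fintype.card (KeyRing P K) = P.choose K := by
  rw [Fintype.card_finset_len, Fintype.card_fin]

theorem isProbabilityMeasure_uniformKeyMeasure (h : K ≤ P) :
    IsProbabilityMeasure (uniformKeyMeasure P K) := by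
  have hcard : (P.choose K : ℝ≥0∞) ≠ 0 := by exact_mod_cast (Nat.choose_pos h).ne'
  refine ⟨?_⟩
  simp [uniformKeyMeasure, Measure.count_univ,
    ENNReal.inv_mul_cancel hcard (ENNReal.natCast_ne_top _)]

theorem uniformKeyMeasure_real_setOf (q : Finset (Fin P) → Prop) [DecidablePred q] :
    (uniformKeyMeasure P K).real {x | q x.1} =
      ((Finset.univ.powersetCard K).filter q).card / P.choose K := by
  have hcount : Measure.count {x : KeyRing P K | q x.1} =
      (((Finset.univ.powersetCard K).filter q).card : ℝ≥0∞) := by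
    have himage : Subtype.val '' {x : KeyRing P K | q x.1} =
        ((Finset.univ.powersetCard K).filter q : Finset (Finset (Fin P))) := by
      ext x
      simp [Finset.mem_powersetCard, and_comm]
    rw [Measure.count_apply .of_discrete, ← Subtype.val_injective.encard_image, himage,
      Set.encard_coe_eq_coe_finsetCard]
    rfl
  rw [measureReal_def, uniformKeyMeasure, Measure.smul_apply, hcount, card_keyRing, smul_eq_mul,
    ENNReal.toReal_mul, ENNReal.toReal_inv, ENNReal.toReal_natCast, ENNReal.toReal_natCast,
    inv_mul_eq_div]

theorem uniformKeyMeasure_real_subset (D : Finset (Fin P)) :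
    (uniformKeyMeasure P K).real {x | x.1 ⊆ D} = D.card.choose K / P.choose K := by
  rw [uniformKeyMeasure_real_setOf (· ⊆ D), ← Finset.card_powersetCard]
  congr 3
  ext x
  simp [Finset.mem_powersetCard, and_comm]

/-- The probability that a uniform `K`-element key ring misses `a` prescribed keys. -/
def avoidProb (P K a : ℕ) : ℝ := (P - a).choose K / P.choose K

theorem uniformKeyMeasure_real_disjoint (D : Finset (Fin P)) :
    (uniformKeyMeasure P K).real {x | Disjoint x.1 D} = avoidProb P K D.card := by
  simp only [← Finset.subset_compl_iff_disjoint_right, uniformKeyMeasure_real_subset,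
    Finset.card_compl, Fintype.card_fin, avoidProb]

theorem psf_eq_one_sub_avoidProb (K P : ℕ) : psf K P = 1 - avoidProb P K K := by
  unfold psf avoidProb
  split_ifs with h
  · rfl
  · rw [Nat.choose_eq_zero_of_lt (by omega)]
    simp

end UniformKeyRing

theorem half_min_one_le_one_sub_exp_neg {x : ℝ} (hx : 0 ≤ x) :
    min x 1 / 2 ≤ 1 - Real.exp (-x) := by
  have hexp : Real.exp (-x) ≤ (1 + x)⁻¹ := by
    rw [Real.exp_neg]
    exact inv_anti₀ (by positivity) (by linarith [Real.add_one_le_exp x])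
  have hmin : min x 1 / 2 * (1 + x) ≤ x := by
    rcases le_total x 1 with h | h
    · rw [min_eq_left h]
      nlinarith
    · rw [min_eq_right h]
      linarith
  have hinv : (1 + x)⁻¹ * (1 + x) = 1 := inv_mul_cancel₀ (by positivity)
  nlinarith

theorem mul_sum_range_le_of_antitone {d : ℕ → ℝ} (hd : Antitone d) {a b : ℕ} (hab : a ≤ b) :
    a * ∑ t ∈ Finset.range b, d t ≤ b * ∑ t ∈ Finset.range a, d t := by
  induction b, hab using Nat.le_induction with
  | base => rfl
  | succ b hab ih =>
    have hlast : a * d b ≤ ∑ t ∈ Finset.range a, d t := by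
      simpa using Finset.card_nsmul_le_sum (Finset.range a) d (d b) fun t ht =>
        hd ((Finset.mem_range.1 ht).le.trans hab)
    rw [Finset.sum_range_succ]
    push_cast
    linarith

theorem choose_mul_choose_le (N a b K : ℕ) :
    N.choose K * (N + a + b).choose K ≤ (N + a).choose K * (N + b).choose K := by
  rcases lt_or_ge N K with h | h
  · simp [Nat.choose_eq_zero_of_lt h]
  · have hdesc : N.descFactorial K * (N + a + b).descFactorial K ≤
        (N + a).descFactorial K * (N + b).descFactorial K := by
      simp only [Nat.descFactorial_eq_prod_range, ← Finset.prod_mul_distrib]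
      refine Finset.prod_le_prod' fun i hi => ?_
      obtain ⟨m, rfl⟩ := Nat.exists_eq_add_of_le ((Finset.mem_range.1 hi).le.trans h)
      simp only [add_assoc, Nat.add_sub_cancel_left]
      nlinarith [Nat.zero_le (a * b)]
    simp only [Nat.descFactorial_eq_factorial_mul_choose] at hdesc
    exact Nat.le_of_mul_le_mul_left (by linarith) (pow_pos K.factorial_pos 2)

theorem choose_div_choose_le_pow {m P : ℕ} (K : ℕ) (hm : m ≤ P) :
    (m.choose K : ℝ) / P.choose K ≤ ((m : ℝ) / P) ^ K := by
  rcases lt_or_ge P K with h | h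
  · rw [Nat.choose_eq_zero_of_lt h]
    simp only [Nat.cast_zero, div_zero]
    positivity
  rcases Nat.eq_zero_or_pos P with rfl | hP
  · obtain rfl : K = 0 := by omega
    simp
  have hdesc : m.descFactorial K * P ^ K ≤ m ^ K * P.descFactorial K := by
    have hpow (c : ℕ) : c ^ K = ∏ _i ∈ Finset.range K, c := by simp
    rw [Nat.descFactorial_eq_prod_range, Nat.descFactorial_eq_prod_range, hpow, hpow,
      ← Finset.prod_mul_distrib, ← Finset.prod_mul_distrib]
    refine Finset.prod_le_prod' fun i _ => ?_
    rw [Nat.sub_mul, Nat.mul_sub]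
    exact Nat.sub_le_sub_left ((mul_comm m i).trans_le (Nat.mul_le_mul_left i hm)) _
  simp only [Nat.descFactorial_eq_factorial_mul_choose] at hdesc
  rw [div_pow, div_le_div_iff₀ (by exact_mod_cast Nat.choose_pos h) (by positivity)]
  exact_mod_cast Nat.le_of_mul_le_mul_left (by linarith) K.factorial_pos

section AvoidProb

variable {P K : ℕ}

theorem avoidProb_nonneg (P K a : ℕ) : 0 ≤ avoidProb P K a := by
  unfold avoidProb
  positivity

theorem avoidProb_zero (h : K ≤ P) : avoidProb P K 0 = 1 :=
  div_self (by exact_mod_cast (Nat.choose_pos h).ne')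

theorem avoidProb_anti (P K : ℕ) : Antitone (avoidProb P K) := fun a b hab => by
  unfold avoidProb
  gcongr

theorem avoidProb_add_le (h : K ≤ P) {a b : ℕ} (hab : a + b ≤ P) :
    avoidProb P K (a + b) ≤ avoidProb P K a * avoidProb P K b := by
  obtain ⟨N, rfl⟩ := Nat.exists_eq_add_of_le hab
  have hpos : (0 : ℝ) < (a + b + N).choose K := by exact_mod_cast Nat.choose_pos h
  have hchoose : (N.choose K * (a + b + N).choose K : ℝ) ≤
      (b + N).choose K * (a + N).choose K := by
    have := choose_mul_choose_le N b a K
    rw [show N + b + a = a + b + N by ring, add_comm N b, add_comm N a] at this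
    exact_mod_cast this
  unfold avoidProb
  rw [div_mul_div_comm, div_le_div_iff₀ hpos (mul_pos hpos hpos), Nat.add_sub_cancel_left,
    show a + b + N - a = b + N by omega, show a + b + N - b = a + N by omega, ← mul_assoc]
  exact mul_le_mul_of_nonneg_right hchoose hpos.le

theorem two_mul_choose_succ_le (M K : ℕ) :
    2 * (M + 1).choose K ≤ M.choose K + (M + 2).choose K := by
  rcases K with _ | k
  · simp
  · have := Nat.choose_le_choose k (Nat.le_add_right M 1)
    rw [Nat.choose_succ_succ' (M + 1), Nat.choose_succ_succ' M]
    omega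

theorem avoidProb_sub_succ_antitone (P K : ℕ) :
    Antitone fun a => avoidProb P K a - avoidProb P K (a + 1) := by
  refine antitone_nat_of_succ_le fun a => ?_
  have hconvex : 2 * (P - (a + 1)).choose K ≤ (P - (a + 2)).choose K + (P - a).choose K := by
    rcases le_or_gt (a + 2) P with h | h
    · obtain ⟨M, rfl⟩ := Nat.exists_eq_add_of_le h
      have := two_mul_choose_succ_le M K
      rwa [show a + 2 + M - (a + 1) = M + 1 by omega, show a + 2 + M - (a + 2) = M by omega,
        show a + 2 + M - a = M + 2 by omega]
    · rw [show P - (a + 1) = 0 by omega, show P - (a + 2) = 0 by omega, two_mul]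
      exact Nat.add_le_add_left (Nat.choose_le_choose K (Nat.zero_le _)) _
  have hconvex' : (2 * (P - (a + 1)).choose K : ℝ) ≤
      (P - (a + 2)).choose K + (P - a).choose K := by exact_mod_cast hconvex
  unfold avoidProb
  rw [← sub_div, ← sub_div]
  exact div_le_div_of_nonneg_right (by linarith) (Nat.cast_nonneg _)

theorem mul_one_sub_avoidProb_le (h : K ≤ P) {a b : ℕ} (hab : a ≤ b) :
    a * (1 - avoidProb P K b) ≤ b * (1 - avoidProb P K a) := by
  have hsum := mul_sum_range_le_of_antitone (avoidProb_sub_succ_antitone P K) hab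
  simpa only [Finset.sum_range_sub', avoidProb_zero h] using hsum

theorem avoidProb_one (h : K ≤ P) (hP : 0 < P) : avoidProb P K 1 = 1 - K / P := by
  obtain ⟨N, rfl⟩ := Nat.exists_eq_succ_of_ne_zero hP.ne'
  have hchoose : (N.choose K * (N + 1 : ℕ) : ℝ) = (N + 1).choose K * ((N + 1 : ℕ) - K) := by
    rw [← Nat.cast_sub h]
    exact_mod_cast Nat.choose_mul_succ_eq N K
  have hpos : (0 : ℝ) < (N + 1).choose K := by exact_mod_cast Nat.choose_pos h
  unfold avoidProb
  rw [one_sub_div (by positivity), Nat.succ_sub_one, Nat.succ_eq_add_one,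
    div_eq_div_iff hpos.ne' (by positivity), hchoose]
  ring

theorem avoidProb_le_exp {a : ℕ} (ha : a ≤ P) : avoidProb P K a ≤ Real.exp (-(a * K / P)) := by
  rcases Nat.eq_zero_or_pos P with rfl | hP
  · obtain rfl : a = 0 := by omega
    simpa [avoidProb] using div_self_le_one ((Nat.choose 0 K : ℕ) : ℝ)
  calc avoidProb P K a ≤ (((P - a : ℕ) : ℝ) / P) ^ K := choose_div_choose_le_pow K (P.sub_le a)
    _ = (1 - a / P) ^ K := by rw [Nat.cast_sub ha, sub_div, div_self (by positivity)]
    _ ≤ Real.exp (-(a / P)) ^ K :=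
        pow_le_pow_left₀ (sub_nonneg.2 (div_le_one_of_le₀ (by exact_mod_cast ha) P.cast_nonneg))
          (Real.one_sub_le_exp_neg _) K
    _ = Real.exp (-(a * K / P)) := by
        rw [← Real.exp_nat_mul]
        ring_nf

theorem psf_nonneg (h : K ≤ P) : 0 ≤ psf K P := by
  rw [psf_eq_one_sub_avoidProb, ← avoidProb_zero h, sub_nonneg]
  exact avoidProb_anti P K K.zero_le

theorem psf_le_one (K P : ℕ) : psf K P ≤ 1 := by
  rw [psf_eq_one_sub_avoidProb]
  linarith [avoidProb_nonneg P K K]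

theorem psf_le_sq_div (h : K ≤ P) : psf K P ≤ K ^ 2 / P := by
  rw [psf_eq_one_sub_avoidProb]
  rcases Nat.eq_zero_or_pos K with rfl | hK
  · simp [avoidProb]
  have hslope := mul_one_sub_avoidProb_le h (Nat.succ_le_of_lt hK)
  rw [avoidProb_one h (hK.trans_le h)] at hslope
  calc 1 - avoidProb P K K ≤ K * (1 - (1 - K / P)) := by simpa using hslope
    _ = K ^ 2 / P := by ring

theorem half_min_one_le_psf (h : K ≤ P) : min ((K : ℝ) ^ 2 / P) 1 / 2 ≤ psf K P := by
  rw [psf_eq_one_sub_avoidProb]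
  have := avoidProb_le_exp (P := P) (K := K) h
  rw [← sq] at this
  linarith [half_min_one_le_one_sub_exp_neg (x := (K : ℝ) ^ 2 / P) (by positivity)]

end AvoidProb

theorem exists_pairwiseDisjoint_sum_card_eq_card_biUnion {V α : Type*} [DecidableEq α]
    (T : Finset V) (f : V → Finset α) :
    ∃ A : V → Finset α, (T : Set V).PairwiseDisjoint A ∧ (∀ i ∈ T, A i ⊆ f i) ∧
      ∑ i ∈ T, (A i).card = (T.biUnion f).card := by
  classical
  rcases T.eq_empty_or_nonempty with rfl | ⟨i₀, -⟩
  · exact ⟨f, by simp⟩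
  have : Nonempty V := ⟨i₀⟩
  have howner : ∀ a ∈ T.biUnion f, ∃ i ∈ T, a ∈ f i := fun a => Finset.mem_biUnion.1
  choose! o hoT hof using howner
  refine ⟨fun i => (T.biUnion f).filter (o · = i), fun i _ j _ hij => ?_, fun i _ a ha => ?_,
    (Finset.card_eq_sum_card_fiberwise hoT).symm⟩
  · exact Finset.disjoint_left.2 fun a hi hj =>
      hij ((Finset.mem_filter.1 hi).2.symm.trans (Finset.mem_filter.1 hj).2)
  · obtain ⟨haT, rfl⟩ := Finset.mem_filter.1 ha
    exact hof a haT

section FreshVertex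

variable {V : Type*} {P K : ℕ} {p : ℝ}

/-- The number of key rings with index in `T` that share a key with the key ring `x`. -/
def hitCount (k : V → KeyRing P K) (T : Finset V) (x : KeyRing P K) : ℕ :=
  (T.filter fun i => (x.1 ∩ (k i).1).Nonempty).card

/-- The set of all keys held by the vertices of `T`. -/
def keyUnion (k : V → KeyRing P K) (T : Finset V) : Finset (Fin P) :=
  T.biUnion fun i => (k i).1

/-- The conditional probability, given the key rings `k`, that a vertex outside `T` has no
neighbour in `T`: its uniform ring `x` meets `hitCount k T x` of the rings in `T`, and each of the
corresponding channels must be off. -/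
def noLinkProb (p : ℝ) (k : V → KeyRing P K) (T : Finset V) : ℝ :=
  ∫ x, (1 - p) ^ hitCount k T x ∂uniformKeyMeasure P K

theorem hitCount_mono (k : V → KeyRing P K) {T T' : Finset V} (h : T ⊆ T') (x : KeyRing P K) :
    hitCount k T x ≤ hitCount k T' x :=
  Finset.card_le_card (Finset.filter_subset_filter _ h)

theorem pow_hitCount_eq_prod (k : V → KeyRing P K) (T : Finset V) (x : KeyRing P K) :
    (1 - p) ^ hitCount k T x = ∏ i ∈ T, if Disjoint x.1 (k i).1 then 1 else 1 - p := by
  rw [Finset.prod_ite, Finset.prod_const_one, one_mul, Finset.prod_const, hitCount]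
  simp only [Finset.disjoint_iff_inter_eq_empty, ← Finset.nonempty_iff_ne_empty]

variable (hK : K ≤ P)
include hK

theorem noLinkProb_anti (hp₀ : 0 ≤ p) (hp₁ : p ≤ 1) (k : V → KeyRing P K) :
    Antitone (noLinkProb p k) := fun T T' h => by
  have := isProbabilityMeasure_uniformKeyMeasure hK
  exact integral_mono .of_finite .of_finite fun x =>
    pow_le_pow_of_le_one (by linarith) (by linarith) (hitCount_mono k h x)

theorem integral_meets_eq_psf (y : KeyRing P K) :
    ∫ x, (if (x.1 ∩ y.1).Nonempty then 1 else 0 : ℝ) ∂uniformKeyMeasure P K = psf K P := by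
  have := isProbabilityMeasure_uniformKeyMeasure hK
  have hcompl : {x : KeyRing P K | (x.1 ∩ y.1).Nonempty} = {x | Disjoint x.1 y.1}ᶜ := by
    ext x
    simp [Finset.disjoint_iff_inter_eq_empty, Finset.nonempty_iff_ne_empty]
  rw [integral_ite_one_zero, hcompl, probReal_compl_eq_one_sub .of_discrete,
    uniformKeyMeasure_real_disjoint, y.2, psf_eq_one_sub_avoidProb]

theorem noLinkProb_singleton (p : ℝ) (k : V → KeyRing P K) (i : V) :
    noLinkProb p k {i} = 1 - pef K P p := by
  have := isProbabilityMeasure_uniformKeyMeasure hK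
  have hpow (x : KeyRing P K) :
      (1 - p) ^ hitCount k {i} x = 1 - p * (if (x.1 ∩ (k i).1).Nonempty then 1 else 0) := by
    rw [hitCount, Finset.filter_singleton]
    split_ifs <;> simp
  simp only [noLinkProb, hpow]
  rw [integral_sub .of_finite .of_finite, integral_const_mul, integral_meets_eq_psf hK, pef]
  simp

-- Negative association: missing some keys only makes a ring more likely to hit other keys.
theorem integral_disjoint_mul_prod_le (hp₀ : 0 ≤ p) (hp₁ : p ≤ 1) {T : Finset V}
    {A : V → Finset (Fin P)} (hA : (T : Set V).PairwiseDisjoint A) (D : Finset (Fin P))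
    (hD : ∀ i ∈ T, Disjoint D (A i)) :
    ∫ x, (if Disjoint x.1 D then 1 else 0) * ∏ i ∈ T, (if Disjoint x.1 (A i) then 1 else 1 - p)
        ∂uniformKeyMeasure P K ≤
      avoidProb P K D.card * ∏ i ∈ T, (1 - p + p * avoidProb P K (A i).card) := by
  classical
  have := isProbabilityMeasure_uniformKeyMeasure hK
  induction T using Finset.induction_on generalizing D with
  | empty => simp [integral_ite_one_zero, uniformKeyMeasure_real_disjoint]
  | insert a T ha ih =>
    simp only [Finset.forall_mem_insert] at hD
    rw [Finset.coe_insert, Set.pairwiseDisjoint_insert_of_notMem (by exact_mod_cast ha)] at hA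
    set R := ∏ i ∈ T, (1 - p + p * avoidProb P K (A i).card)
    have hR : 0 ≤ R := Finset.prod_nonneg fun i _ =>
      add_nonneg (sub_nonneg.2 hp₁) (mul_nonneg hp₀ (avoidProb_nonneg _ _ _))
    have havoid : avoidProb P K (D ∪ A a).card ≤
        avoidProb P K D.card * avoidProb P K (A a).card := by
      rw [Finset.card_union_of_disjoint hD.1]
      refine avoidProb_add_le hK ?_
      rw [← Finset.card_union_of_disjoint hD.1]
      exact (Finset.card_le_univ _).trans_eq (Fintype.card_fin P)
    have hsplit (x : KeyRing P K) (c : ℝ) :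
        (if Disjoint x.1 D then 1 else 0) * ((if Disjoint x.1 (A a) then 1 else 1 - p) * c) =
          (1 - p) * ((if Disjoint x.1 D then 1 else 0) * c) +
            p * ((if Disjoint x.1 (D ∪ A a) then 1 else 0) * c) := by
      by_cases hxD : Disjoint x.1 D <;> by_cases hxA : Disjoint x.1 (A a) <;>
        simp only [Finset.disjoint_union_right, hxD, hxA, and_self, and_false, false_and,
          if_true, if_false] <;> ring
    simp only [Finset.prod_insert ha, hsplit]
    rw [integral_add .of_finite .of_finite, integral_const_mul, integral_const_mul]
    have hdrop := ih hA.1 D hD.2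
    have hjoin := ih hA.1 (D ∪ A a) fun i hi =>
      Finset.disjoint_union_left.2 ⟨hD.2 i hi, hA.2 i hi⟩
    calc _ ≤ (1 - p) * (avoidProb P K D.card * R) +
          p * (avoidProb P K D.card * avoidProb P K (A a).card * R) := by
          exact add_le_add (mul_le_mul_of_nonneg_left hdrop (sub_nonneg.2 hp₁))
            (mul_le_mul_of_nonneg_left
              (hjoin.trans (mul_le_mul_of_nonneg_right havoid hR)) hp₀)
      _ = _ := by ring

theorem noLinkProb_le_exp_card_keyUnion (hp₀ : 0 ≤ p) (hp₁ : p ≤ 1) (k : V → KeyRing P K)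
    (T : Finset V) :
    noLinkProb p k T ≤ Real.exp (-(p * psf K P * (keyUnion k T).card / K)) := by
  have := isProbabilityMeasure_uniformKeyMeasure hK
  obtain ⟨A, hdisj, hsub, hcard⟩ :=
    exists_pairwiseDisjoint_sum_card_eq_card_biUnion T fun i => (k i).1
  have hfactor : ∀ i ∈ T, 1 - p + p * avoidProb P K (A i).card ≤
      Real.exp (-(p * psf K P * (A i).card / K)) := fun i hi => by
    have hle : (A i).card ≤ K := (Finset.card_le_card (hsub i hi)).trans_eq (k i).2
    have hslope : (A i).card * psf K P / K ≤ 1 - avoidProb P K (A i).card := by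
      refine div_le_of_le_mul₀ K.cast_nonneg ?_ ?_
      · rw [← avoidProb_zero hK, sub_nonneg]
        exact avoidProb_anti P K (Nat.zero_le _)
      · rw [psf_eq_one_sub_avoidProb, mul_comm _ (K : ℝ)]
        exact mul_one_sub_avoidProb_le hK hle
    calc 1 - p + p * avoidProb P K (A i).card
        ≤ 1 - p * ((A i).card * psf K P / K) := by nlinarith
      _ ≤ Real.exp (-(p * ((A i).card * psf K P / K))) := Real.one_sub_le_exp_neg _
      _ = Real.exp (-(p * psf K P * (A i).card / K)) := by ring_nf
  calc noLinkProb p k T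
      ≤ ∫ x, (if Disjoint x.1 ∅ then 1 else 0) *
          ∏ i ∈ T, (if Disjoint x.1 (A i) then 1 else 1 - p) ∂uniformKeyMeasure P K := by
        refine integral_mono .of_finite .of_finite fun x => ?_
        simp only [pow_hitCount_eq_prod, Finset.disjoint_empty_right, if_true, one_mul]
        refine Finset.prod_le_prod (fun i _ => ?_) fun i hi => ?_
        · split_ifs <;> linarith
        · have := Finset.disjoint_of_subset_right (s := x.1) (hsub i hi)
          split_ifs <;> first | linarith | tauto
    _ ≤ ∏ i ∈ T, (1 - p + p * avoidProb P K (A i).card) := by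
        simpa [avoidProb_zero hK] using integral_disjoint_mul_prod_le hK hp₀ hp₁ hdisj ∅ (by simp)
    _ ≤ ∏ i ∈ T, Real.exp (-(p * psf K P * (A i).card / K)) :=
        Finset.prod_le_prod (fun i _ => add_nonneg (sub_nonneg.2 hp₁)
          (mul_nonneg hp₀ (avoidProb_nonneg _ _ _))) hfactor
    _ = Real.exp (-(p * psf K P * (keyUnion k T).card / K)) := by
        rw [← Real.exp_sum, keyUnion, ← hcard, Nat.cast_sum, Finset.mul_sum, Finset.sum_div,
          Finset.sum_neg_distrib]

theorem noLinkProb_le_of_finpartition [DecidableEq V] (hp₁ : p ≤ 1) {k : V → KeyRing P K}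
    {T : Finset V} (Q : Finpartition T) (hQ : Q.parts.Nonempty) {b : ℝ}
    (hb : ∀ B ∈ Q.parts, noLinkProb (1 - (1 - p) ^ Q.parts.card) k B ≤ b) :
    noLinkProb p k T ≤ b := by
  have := isProbabilityMeasure_uniformKeyMeasure hK
  set g := Q.parts.card
  have hg : (g : ℝ) ≠ 0 := by exact_mod_cast hQ.card_pos.ne'
  have : 0 ≤ 1 - p := sub_nonneg.2 hp₁
  have hsum (x : KeyRing P K) : hitCount k T x = ∑ B ∈ Q.parts, hitCount k B x := by
    have h := Finset.sum_biUnion Q.disjoint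
      (f := fun i => if (x.1 ∩ (k i).1).Nonempty then 1 else 0)
    rw [Q.biUnion_parts] at h
    simpa only [hitCount, Finset.card_filter, id_eq] using h
  -- AM-GM over the blocks, so that it suffices to know the key union of one block at a time.
  have hamgm (x : KeyRing P K) : (1 - p) ^ hitCount k T x ≤
      ∑ B ∈ Q.parts, (g : ℝ)⁻¹ * ((1 - p) ^ g) ^ hitCount k B x := by
    have h := Real.geom_mean_le_arith_mean_weighted Q.parts (fun _ => (g : ℝ)⁻¹)
      (fun B => ((1 - p) ^ g) ^ hitCount k B x) (fun _ _ => by positivity)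
      (by simp [g, mul_inv_cancel₀ hg]) fun B _ => by positivity
    refine le_trans (le_of_eq ?_) h
    rw [hsum, ← Finset.prod_pow_eq_pow_sum]
    refine Finset.prod_congr rfl fun B _ => ?_
    rw [pow_right_comm, Real.pow_rpow_inv_natCast (by positivity) hQ.card_pos.ne']
  calc noLinkProb p k T
      ≤ ∫ x, ∑ B ∈ Q.parts, (g : ℝ)⁻¹ * ((1 - p) ^ g) ^ hitCount k B x ∂uniformKeyMeasure P K :=
        integral_mono .of_finite .of_finite hamgm
    _ = ∑ B ∈ Q.parts, (g : ℝ)⁻¹ * noLinkProb (1 - (1 - p) ^ g) k B := by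
        rw [integral_finsetSum _ fun _ _ => .of_finite]
        simp only [integral_const_mul, noLinkProb, sub_sub_cancel]
    _ ≤ ∑ _B ∈ Q.parts, (g : ℝ)⁻¹ * b := by
        gcongr with _ hB
        exact hb _ hB
    _ = b := by simp [g, mul_inv_cancel_left₀ hg]

end FreshVertex

section SmallComponent

theorem exists_connectedComponent_two_mul_ncard_le {W : Type*} [Finite W] {H : SimpleGraph W}
    (hH : ¬ H.Preconnected) : ∃ C : H.ConnectedComponent, 2 * C.supp.ncard ≤ Nat.card W := by
  simp only [SimpleGraph.Preconnected, not_forall] at hH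
  obtain ⟨a, b, hab⟩ := hH
  have hdisj := SimpleGraph.pairwise_disjoint_supp_connectedComponent H
    fun h => hab (SimpleGraph.ConnectedComponent.eq.1 h)
  have hcard : (H.connectedComponentMk a).supp.ncard + (H.connectedComponentMk b).supp.ncard ≤
      Nat.card W := by
    rw [← Set.ncard_union_eq hdisj, ← Set.ncard_univ]
    exact Set.ncard_le_ncard (Set.subset_univ _)
  rcases le_total (H.connectedComponentMk a).supp.ncard (H.connectedComponentMk b).supp.ncard
    with h | h
  · exact ⟨_, (by omega : 2 * (H.connectedComponentMk a).supp.ncard ≤ Nat.card W)⟩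
  · exact ⟨_, (by omega : 2 * (H.connectedComponentMk b).supp.ncard ≤ Nat.card W)⟩

variable {V : Type*} [Fintype V]

open scoped Classical in
/-- The outer vertex boundary of `T`: the vertices outside `T` with a neighbour in `T`. -/
def outerNbrs (G : SimpleGraph V) (T : Finset V) : Finset V :=
  {v | v ∉ T ∧ ∃ w ∈ T, G.Adj v w}

theorem mem_outerNbrs {G : SimpleGraph V} {T : Finset V} {v : V} :
    v ∈ outerNbrs G T ↔ v ∉ T ∧ ∃ w ∈ T, G.Adj v w := by
  simp [outerNbrs]

open scoped Classical in
/-- The parent maps of rooted forests in which every vertex of `A` has a parent in `T`. Acyclicity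
is expressed by a rank that decreases from each vertex to its parent; vertices outside `A` are sent
to themselves, so that a parent map is determined by its values on `A`. -/
def parentMaps (A T : Finset V) : Finset (V → V) :=
  {f | (∀ v ∈ A, f v ∈ T) ∧ (∀ v ∉ A, f v = v) ∧ ∃ r : V → ℕ, ∀ v ∈ A, r (f v) < r v}

theorem mem_parentMaps {A T : Finset V} {f : V → V} :
    f ∈ parentMaps A T ↔
      (∀ v ∈ A, f v ∈ T) ∧ (∀ v ∉ A, f v = v) ∧ ∃ r : V → ℕ, ∀ v ∈ A, r (f v) < r v := by
  simp [parentMaps]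

theorem card_parentMaps_le (A T : Finset V) : (parentMaps A T).card ≤ T.card ^ A.card := by
  classical
  calc (parentMaps A T).card
      ≤ (Fintype.piFinset fun v => if v ∈ A then T else {v}).card := by
        refine Finset.card_le_card fun f hf => Fintype.mem_piFinset.2 fun v => ?_
        obtain ⟨hA, hfix, -⟩ := mem_parentMaps.1 hf
        split_ifs with hv
        · exact hA v hv
        · exact Finset.mem_singleton.2 (hfix v hv)
    _ = T.card ^ A.card := by
        simp [Fintype.card_piFinset, apply_ite Finset.card]

theorem exists_connected_induce_card_outerNbrs_le {G : SimpleGraph V} {ℓ : ℕ}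
    (hG : vertexConn G ≤ ℓ) (hℓ : ℓ < Fintype.card V) :
    ∃ T : Finset V, T.Nonempty ∧ 2 * T.card ≤ Fintype.card V ∧
      (G.induce (T : Set V)).Connected ∧ (outerNbrs G T).card ≤ ℓ := by
  classical
  have hne : {m | ∃ S : Finset V, S.card = m ∧ ¬ (G.induce (S : Set V)ᶜ).Connected}.Nonempty :=
    ⟨_, Finset.univ, rfl, fun hc => hc.nonempty.elim fun x => x.2 (Finset.mem_univ _)⟩
  obtain ⟨S, hS, hconn⟩ := Nat.sInf_mem hne
  replace hS : S.card ≤ ℓ := hS.trans_le hG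
  have : Nonempty ((S : Set V)ᶜ : Set V) := by
    obtain ⟨x, -, hx⟩ := Finset.exists_mem_notMem_of_card_lt_card (hS.trans_lt hℓ)
    exact ⟨⟨x, hx⟩⟩
  obtain ⟨C, hC⟩ := exists_connectedComponent_two_mul_ncard_le fun h => hconn ⟨h⟩
  have hmem {v : V} : v ∈ (Subtype.val '' C.supp).toFinset ↔ ∃ hv, ⟨v, hv⟩ ∈ C.supp := by simp
  refine ⟨(Subtype.val '' C.supp).toFinset, by simpa using C.nonempty_supp, ?_, ?_, ?_⟩
  · rw [← Set.ncard_eq_toFinset_card', Set.ncard_image_of_injective _ Subtype.val_injective]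
    exact hC.trans ((Nat.card_le_card_of_injective _ Subtype.val_injective).trans_eq
      Nat.card_eq_fintype_card)
  · let φ : C.toSimpleGraph →g G.induce ((Subtype.val '' C.supp).toFinset : Set V) :=
      ⟨fun x => ⟨x.1.1, hmem.2 ⟨x.1.2, x.2⟩⟩, fun h => h⟩
    refine C.connected_toSimpleGraph.map φ fun ⟨v, hv⟩ => ?_
    obtain ⟨hvS, hvC⟩ := hmem.1 hv
    exact ⟨⟨⟨v, hvS⟩, hvC⟩, rfl⟩
  · refine (Finset.card_le_card fun u hu => ?_).trans hS
    obtain ⟨huT, w, hw, hadj⟩ := mem_outerNbrs.1 hu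
    obtain ⟨hwS, hwC⟩ := hmem.1 hw
    by_contra huS
    exact huT (hmem.2 ⟨huS, C.mem_supp_of_adj_mem_supp hwC (v := ⟨u, huS⟩) hadj.symm⟩)

theorem exists_parentMaps_adj [DecidableEq V] {G : SimpleGraph V} {T : Finset V}
    (hT : (G.induce (T : Set V)).Connected) {a : V} (ha : a ∈ T) :
    ∃ f ∈ parentMaps (T.erase a) T, ∀ v ∈ T.erase a, G.Adj v (f v) := by
  set H := G.induce (T : Set V)
  let r (v : V) : ℕ := if hv : v ∈ T then H.dist ⟨v, hv⟩ ⟨a, ha⟩ else 0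
  have hparent (v : V) : ∃ w, (v ∈ T.erase a → w ∈ T ∧ G.Adj v w ∧ r w < r v) ∧
      (v ∉ T.erase a → w = v) := by
    by_cases hv : v ∈ T.erase a
    · obtain ⟨hva, hvT⟩ := Finset.mem_erase.1 hv
      obtain ⟨walk, hwalk⟩ := hT.exists_walk_length_eq_dist ⟨v, hvT⟩ ⟨a, ha⟩
      cases walk with
      | nil => exact absurd rfl hva
      | @cons _ w _ hadj tail =>
        refine ⟨w, fun _ => ⟨w.2, hadj, ?_⟩, fun h => absurd hv h⟩
        have hrv : r v = tail.length + 1 := (dif_pos hvT).trans hwalk.symm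
        have hrw : r w = H.dist w ⟨a, ha⟩ := dif_pos w.2
        rw [hrv, hrw]
        exact Nat.lt_succ_of_le (SimpleGraph.dist_le tail)
    · exact ⟨v, fun h => absurd h hv, fun _ => rfl⟩
  choose f hf hfix using hparent
  exact ⟨f, mem_parentMaps.2 ⟨fun v hv => (hf v hv).1, hfix, r, fun v hv => (hf v hv).2.2⟩,
    fun v hv => (hf v hv).2.1⟩

end SmallComponent

section ForestEstimate

theorem integral_prod_meets_le {V : Type*} [Fintype V] {P K : ℕ} (hK : K ≤ P) (A : Finset V)
    {f : V → V} {r : V → ℕ} (hr : ∀ v ∈ A, r (f v) < r v) :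
    ∫ k, ∏ v ∈ A, (if ((k v).1 ∩ (k (f v)).1).Nonempty then 1 else 0 : ℝ)
      ∂Measure.pi (fun _ : V => uniformKeyMeasure P K) ≤ psf K P ^ A.card := by
  have := isProbabilityMeasure_uniformKeyMeasure hK
  classical
  induction A using Finset.induction_on_max_value r with
  | empty => simp
  | insert a A ha hmax ih =>
    simp only [Finset.forall_mem_insert] at hr
    have hfa : f a ≠ a := fun h => (h ▸ hr.1).ne rfl
    have hdep : DependsOn (fun k : V → KeyRing P K =>
        ∏ v ∈ A, (if ((k v).1 ∩ (k (f v)).1).Nonempty then 1 else 0 : ℝ)) {a}ᶜ := by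
      refine fun k k' h => Finset.prod_congr rfl fun v hv => ?_
      have hva : v ≠ a := ne_of_mem_of_not_mem hv ha
      have hfva : f v ≠ a := fun hf => ((hf ▸ hr.2 v hv).trans_le (hmax v hv)).false
      rw [h v hva, h (f v) hfva]
    simp only [Finset.prod_insert ha, Finset.card_insert_of_notMem ha, pow_succ,
      mul_comm (ite _ _ _)]
    refine (integral_pi_mul_le_of_dependsOn _
      (fun k => Finset.prod_nonneg fun v _ => by split_ifs <;> simp) hdep
      fun k _ => ?_).trans (mul_le_mul_of_nonneg_right (ih hr.2) (psf_nonneg hK))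
    simp only [Function.update_self, Function.update_of_ne hfa]
    exact (integral_meets_eq_psf hK (k (f a))).le

theorem injOn_sym2_mk_of_rank_lt {V : Type*} {A : Set V} {f : V → V} {r : V → ℕ}
    (hr : ∀ v ∈ A, r (f v) < r v) : Set.InjOn (fun v => s(v, f v)) A := fun v hv w hw hvw => by
  rcases Sym2.eq_iff.1 hvw with h | ⟨h₁, h₂⟩
  · exact h.1
  · exact absurd (h₂ ▸ hr v hv) (h₁ ▸ hr w hw).asymm

theorem hitCount_congr {V : Type*} {P K : ℕ} {k k' : V → KeyRing P K} {T : Finset V}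
    (h : ∀ i ∈ T, k i = k' i) (x : KeyRing P K) : hitCount k T x = hitCount k' T x :=
  congrArg Finset.card (Finset.filter_congr fun i hi => by rw [h i hi])

variable {n P K : ℕ} {p : ℝ}

theorem integral_pi_bern_forest_mul_prod (hp₀ : 0 ≤ p) (hp₁ : p ≤ 1) (k : Fin n → KeyRing P K)
    {A T : Finset (Fin n)} (hAT : A ⊆ T) {f : Fin n → Fin n} (hf : f ∈ parentMaps A T) (θ : ℝ) :
    ∫ c, (if ∀ v ∈ A, c s(v, f v) = true then 1 else 0) *
        ∏ u ∈ Tᶜ, (if ∃ i ∈ T, ((k u).1 ∩ (k i).1).Nonempty ∧ c s(u, i) = true then θ else 1)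
        ∂Measure.pi (fun _ : Sym2 (Fin n) => bern p) =
      p ^ A.card * ∏ u ∈ Tᶜ, (θ + (1 - θ) * (1 - p) ^ hitCount k T (k u)) := by
  obtain ⟨hfT, -, r, hr⟩ := mem_parentMaps.1 hf
  set E₀ : Finset (Sym2 (Fin n)) := A.image fun v => s(v, f v)
  set E : Fin n → Finset (Sym2 (Fin n)) := fun u =>
    (T.filter fun i => ((k u).1 ∩ (k i).1).Nonempty).image fun i => s(u, i)
  have hE₀card : E₀.card = A.card := Finset.card_image_of_injOn (injOn_sym2_mk_of_rank_lt hr)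
  have hEcard (u : Fin n) : (E u).card = hitCount k T (k u) :=
    Finset.card_image_of_injective _ fun i j hij => Sym2.congr_right.1 hij
  have hmemE {u : Fin n} {e : Sym2 (Fin n)} (he : e ∈ E u) : ∃ i ∈ T, e = s(u, i) := by
    obtain ⟨i, hi, rfl⟩ := Finset.mem_image.1 he
    exact ⟨i, (Finset.mem_filter.1 hi).1, rfl⟩
  have hE₀E (u) (hu : u ∈ Tᶜ) : Disjoint E₀ (E u) := by
    refine Finset.disjoint_left.2 fun e he₀ he => Finset.mem_compl.1 hu ?_
    obtain ⟨v, hv, rfl⟩ := Finset.mem_image.1 he₀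
    obtain ⟨i, -, hi⟩ := hmemE he
    rcases Sym2.eq_iff.1 hi with h | h
    · exact h.1 ▸ hAT hv
    · exact h.2 ▸ hfT v hv
  have hEE : ((Tᶜ : Finset (Fin n)) : Set (Fin n)).PairwiseDisjoint E := by
    refine fun u hu w _ huw => Finset.disjoint_left.2 fun e heu hew => ?_
    obtain ⟨i, -, rfl⟩ := hmemE heu
    obtain ⟨j, hj, hij⟩ := hmemE hew
    rcases Sym2.eq_iff.1 hij with h | h
    · exact huw h.1
    · exact Finset.mem_compl.1 hu (h.1 ▸ hj)
  have hint := integral_pi_bern_forall_mul_prod_exists hp₀ hp₁ Tᶜ hE₀E hEE θ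
  simpa only [E₀, E, Finset.forall_mem_image, Finset.exists_mem_image, Finset.mem_filter,
    and_assoc, hE₀card, hEcard] using hint

theorem integral_pi_uniformKeyMeasure_forest_mul_prod_le (hK : K ≤ P) (hp₁ : p ≤ 1)
    {A T : Finset (Fin n)} (hAT : A ⊆ T) {f : Fin n → Fin n} (hf : f ∈ parentMaps A T)
    {θ b : ℝ} (hθ₀ : 0 ≤ θ) (hθ₁ : θ ≤ 1) (hb : 0 ≤ b) :
    ∫ k, (if noLinkProb p k T ≤ b ∧ ∀ v ∈ A, ((k v).1 ∩ (k (f v)).1).Nonempty then 1 else 0) *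
        ∏ u ∈ Tᶜ, (θ + (1 - θ) * (1 - p) ^ hitCount k T (k u))
        ∂Measure.pi (fun _ : Fin n => uniformKeyMeasure P K) ≤
      psf K P ^ A.card * (θ + (1 - θ) * b) ^ (n - T.card) := by
  have := isProbabilityMeasure_uniformKeyMeasure hK
  obtain ⟨hfT, -, r, hr⟩ := mem_parentMaps.1 hf
  have hθ' : 0 ≤ 1 - θ := sub_nonneg.2 hθ₁
  have hmem {i : Fin n} (hi : i ∈ T) : i ∈ ((Tᶜ : Finset (Fin n)) : Set (Fin n))ᶜ := by simpa
  calc _ ≤ (∫ k, (if noLinkProb p k T ≤ b ∧ ∀ v ∈ A, ((k v).1 ∩ (k (f v)).1).Nonempty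
          then 1 else 0 : ℝ) ∂Measure.pi (fun _ : Fin n => uniformKeyMeasure P K)) *
        ∏ _u ∈ Tᶜ, (θ + (1 - θ) * b) := by
        refine integral_pi_mul_prod_le_of_dependsOn _ Tᶜ (fun k => by split_ifs <;> simp)
          (fun k k' h => ?_) (fun u _ k => ?_) (fun u _ k k' h => ?_) (fun _ _ => by positivity)
          fun u hu k hk => ?_
        · have hT : ∀ i ∈ T, k i = k' i := fun i hi => h i (hmem hi)
          refine if_congr (and_congr ?_ (forall₂_congr fun v hv => ?_)) rfl rfl
          · simp only [noLinkProb, hitCount_congr hT]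
          · rw [hT v (hAT hv), hT (f v) (hfT v hv)]
        · exact add_nonneg hθ₀ (mul_nonneg hθ' (pow_nonneg (sub_nonneg.2 hp₁) _))
        · rw [hitCount_congr fun i hi => h i (Set.mem_insert_of_mem _ (hmem hi)),
            h u (Set.mem_insert _ _)]
        · have hu' : ∀ i ∈ T, i ≠ u := fun i hi h => Finset.mem_compl.1 hu (h ▸ hi)
          have hb' : noLinkProb p k T ≤ b := by
            by_contra h
            exact hk (if_neg fun h' => h h'.1)
          simp only [Function.update_self,
            hitCount_congr fun i hi => Function.update_of_ne (hu' i hi) _ k]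
          rw [integral_add .of_finite .of_finite, integral_const_mul]
          simpa [noLinkProb] using add_le_add_right (mul_le_mul_of_nonneg_left hb' hθ') θ
    _ ≤ psf K P ^ A.card * (θ + (1 - θ) * b) ^ (n - T.card) := by
        rw [Finset.prod_const, Finset.card_compl, Fintype.card_fin]
        refine mul_le_mul_of_nonneg_right ((integral_mono .of_finite .of_finite fun k => ?_).trans
          (integral_prod_meets_le hK A hr)) (by positivity)
        simp only [Finset.prod_boole]
        split_ifs with h h' <;> first | exact absurd h.2 h' | simp

theorem isProbabilityMeasure_gonMeasure (hK : K ≤ P) (hp₀ : 0 ≤ p) (hp₁ : p ≤ 1) :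
    IsProbabilityMeasure (gonMeasure n K P p) := by
  have := isProbabilityMeasure_uniformKeyMeasure hK
  have := isProbabilityMeasure_bern hp₀ hp₁
  exact inferInstanceAs (IsProbabilityMeasure (Measure.prod _ _))

theorem indicator_outerNbrs_le (k : Fin n → KeyRing P K) (c : Sym2 (Fin n) → Bool)
    (T : Finset (Fin n)) {θ : ℝ} (hθ₀ : 0 < θ) (hθ₁ : θ ≤ 1) (ℓ : ℕ) :
    (if (outerNbrs (gonGraph (k, c)) T).card ≤ ℓ then 1 else 0) ≤ θ⁻¹ ^ ℓ * ∏ u ∈ Tᶜ,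
      (if ∃ i ∈ T, ((k u).1 ∩ (k i).1).Nonempty ∧ c s(u, i) = true then θ else 1) := by
  classical
  have hprod : ∏ u ∈ Tᶜ,
      (if ∃ i ∈ T, ((k u).1 ∩ (k i).1).Nonempty ∧ c s(u, i) = true then θ else 1) =
      θ ^ (outerNbrs (gonGraph (k, c)) T).card := by
    rw [Finset.prod_ite, Finset.prod_const, Finset.prod_const_one, mul_one]
    congr 2
    ext u
    rw [Finset.mem_filter, Finset.mem_compl, mem_outerNbrs]
    exact and_congr_right fun hu => exists_congr fun i => and_congr_right fun hi =>
      (and_iff_right fun h : u = i => hu (h ▸ hi)).symm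
  rw [hprod]
  split_ifs with h
  · rw [inv_pow, ← div_eq_inv_mul, one_le_div (pow_pos hθ₀ _)]
    exact pow_le_pow_of_le_one hθ₀.le hθ₁ h
  · positivity

theorem gonMeasure_real_forest_le (hK : K ≤ P) (hp₀ : 0 ≤ p) (hp₁ : p ≤ 1)
    {A T : Finset (Fin n)} (hAT : A ⊆ T) {f : Fin n → Fin n} (hf : f ∈ parentMaps A T)
    {θ b : ℝ} (hθ₀ : 0 < θ) (hθ₁ : θ ≤ 1) (hb : 0 ≤ b) (ℓ : ℕ) :
    (gonMeasure n K P p).real {ω | noLinkProb p ω.1 T ≤ b ∧ (outerNbrs (gonGraph ω) T).card ≤ ℓ ∧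
        ∀ v ∈ A, (gonGraph ω).Adj v (f v)} ≤
      pef K P p ^ A.card * (θ⁻¹ ^ ℓ * (θ + (1 - θ) * b) ^ (n - T.card)) := by
  classical
  have := isProbabilityMeasure_uniformKeyMeasure hK
  have := isProbabilityMeasure_bern hp₀ hp₁
  let F (k : Fin n → KeyRing P K) : ℝ :=
    if noLinkProb p k T ≤ b ∧ ∀ v ∈ A, ((k v).1 ∩ (k (f v)).1).Nonempty then 1 else 0
  let C (k : Fin n → KeyRing P K) (c : Sym2 (Fin n) → Bool) : ℝ :=
    (if ∀ v ∈ A, c s(v, f v) = true then 1 else 0) *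
      ∏ u ∈ Tᶜ, (if ∃ i ∈ T, ((k u).1 ∩ (k i).1).Nonempty ∧ c s(u, i) = true then θ else 1)
  rw [← integral_ite_one_zero]
  calc _ ≤ ∫ ω, θ⁻¹ ^ ℓ * (F ω.1 * C ω.1 ω.2) ∂gonMeasure n K P p := by
        unfold gonMeasure
        refine integral_mono .of_finite .of_finite fun ω => ?_
        split_ifs with h
        · obtain ⟨hb, hℓ, hA⟩ := h
          have hF : F ω.1 = 1 := if_pos ⟨hb, fun v hv => (hA v hv).2.1⟩
          have hC : ∀ v ∈ A, ω.2 s(v, f v) = true := fun v hv => (hA v hv).2.2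
          simpa only [hF, C, if_pos hC, one_mul, if_pos hℓ] using
            indicator_outerNbrs_le ω.1 ω.2 T hθ₀ hθ₁ ℓ
        · simp only [F, C]
          positivity
    _ = θ⁻¹ ^ ℓ * ∫ k, F k * ∫ c, C k c ∂Measure.pi (fun _ : Sym2 (Fin n) => bern p)
          ∂Measure.pi (fun _ : Fin n => uniformKeyMeasure P K) := by
        rw [integral_const_mul, gonMeasure, integral_prod _ .of_finite]
        simp only [integral_const_mul]
    _ ≤ θ⁻¹ ^ ℓ * (p ^ A.card * (psf K P ^ A.card * (θ + (1 - θ) * b) ^ (n - T.card))) := by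
        simp only [C, integral_pi_bern_forest_mul_prod hp₀ hp₁ _ hAT hf, mul_left_comm (F _)]
        rw [integral_const_mul]
        gcongr
        exact integral_pi_uniformKeyMeasure_forest_mul_prod_le hK hp₁ hAT hf hθ₀.le hθ₁ hb
    _ = pef K P p ^ A.card * (θ⁻¹ ^ ℓ * (θ + (1 - θ) * b) ^ (n - T.card)) := by
        rw [pef, mul_pow]
        ring

end ForestEstimate

section UnionBound

variable {n P K ℓ : ℕ} {p : ℝ}

theorem gonMeasure_real_connected_le (hK : K ≤ P) (hp₀ : 0 ≤ p) (hp₁ : p ≤ 1) {T : Finset (Fin n)}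
    (hT : T.Nonempty) {θ b : ℝ} (hθ₀ : 0 < θ) (hθ₁ : θ ≤ 1) (hb : 0 ≤ b) :
    (gonMeasure n K P p).real {ω | noLinkProb p ω.1 T ≤ b ∧ (outerNbrs (gonGraph ω) T).card ≤ ℓ ∧
        ((gonGraph ω).induce (T : Set (Fin n))).Connected} ≤
      min 1 ((T.card * pef K P p) ^ (T.card - 1)) *
        (θ⁻¹ ^ ℓ * (θ + (1 - θ) * b) ^ (n - T.card)) := by
  have := isProbabilityMeasure_gonMeasure (n := n) hK hp₀ hp₁
  have hmix : 0 ≤ θ⁻¹ ^ ℓ * (θ + (1 - θ) * b) ^ (n - T.card) := by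
    have := sub_nonneg.2 hθ₁
    positivity
  have hq : 0 ≤ pef K P p := mul_nonneg hp₀ (psf_nonneg hK)
  obtain ⟨a, ha⟩ := hT
  rw [min_mul_of_nonneg _ _ hmix]
  refine le_min ?_ ?_
  · have hid : id ∈ parentMaps ∅ T := mem_parentMaps.2 ⟨by simp, by simp, 0, by simp⟩
    refine (measureReal_mono fun ω hω => ?_).trans
      (gonMeasure_real_forest_le hK hp₀ hp₁ T.empty_subset hid hθ₀ hθ₁ hb ℓ)
    exact ⟨hω.1, hω.2.1, by simp⟩
  · calc _ ≤ (gonMeasure n K P p).real (⋃ f ∈ parentMaps (T.erase a) T,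
          {ω | noLinkProb p ω.1 T ≤ b ∧ (outerNbrs (gonGraph ω) T).card ≤ ℓ ∧
            ∀ v ∈ T.erase a, (gonGraph ω).Adj v (f v)}) := by
          refine measureReal_mono (fun ω hω => ?_) (measure_ne_top _ _)
          obtain ⟨f, hf, hadj⟩ := exists_parentMaps_adj hω.2.2 ha
          exact Set.mem_biUnion hf ⟨hω.1, hω.2.1, hadj⟩
      _ ≤ ∑ f ∈ parentMaps (T.erase a) T, pef K P p ^ (T.erase a).card *
          (θ⁻¹ ^ ℓ * (θ + (1 - θ) * b) ^ (n - T.card)) :=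
          (measureReal_biUnion_finset_le _ _).trans <| Finset.sum_le_sum fun f hf =>
            gonMeasure_real_forest_le hK hp₀ hp₁ (T.erase_subset a) hf hθ₀ hθ₁ hb ℓ
      _ ≤ (T.card ^ (T.erase a).card : ℕ) * (pef K P p ^ (T.erase a).card *
          (θ⁻¹ ^ ℓ * (θ + (1 - θ) * b) ^ (n - T.card))) := by
          rw [Finset.sum_const, nsmul_eq_mul]
          gcongr
          exact card_parentMaps_le _ _
      _ = _ := by
          rw [Finset.card_erase_of_mem ha, Nat.cast_pow, ← mul_assoc, ← mul_pow]

/-- An upper bound for the expected number of connected `r`-sets of vertices of `𝔾_on` with at most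
`ℓ` outer neighbours for which `noLinkProb` is at most `b`. Here `q` is the edge probability and
`θ` is the free parameter of the exponential Markov inequality for the number of outer
neighbours. -/
def connectedSetBound (n ℓ : ℕ) (q θ b : ℝ) (r : ℕ) : ℝ :=
  n.choose r * (min 1 ((r * q) ^ (r - 1)) * (θ⁻¹ ^ ℓ * (θ + (1 - θ) * b) ^ (n - r)))

theorem gonMeasure_real_exists_connected_le (hK : K ≤ P) (hp₀ : 0 ≤ p) (hp₁ : p ≤ 1) {r : ℕ}
    (hr : 1 ≤ r) {θ b : ℝ} (hθ₀ : 0 < θ) (hθ₁ : θ ≤ 1) (hb : 0 ≤ b) :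
    (gonMeasure n K P p).real {ω | ∃ T : Finset (Fin n), T.card = r ∧ noLinkProb p ω.1 T ≤ b ∧
        (outerNbrs (gonGraph ω) T).card ≤ ℓ ∧
        ((gonGraph ω).induce (T : Set (Fin n))).Connected} ≤
      connectedSetBound n ℓ (pef K P p) θ b r := by
  have := isProbabilityMeasure_gonMeasure (n := n) hK hp₀ hp₁
  calc _ ≤ (gonMeasure n K P p).real (⋃ T ∈ Finset.powersetCard r Finset.univ,
        {ω | noLinkProb p ω.1 T ≤ b ∧ (outerNbrs (gonGraph ω) T).card ≤ ℓ ∧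
          ((gonGraph ω).induce (T : Set (Fin n))).Connected}) :=
        measureReal_mono (by
          rintro ω ⟨T, hT, h⟩
          exact Set.mem_biUnion (Finset.mem_powersetCard.2 ⟨T.subset_univ, hT⟩) h)
          (measure_ne_top _ _)
    _ ≤ ∑ T ∈ Finset.powersetCard r (Finset.univ : Finset (Fin n)),
        min 1 ((r * pef K P p) ^ (r - 1)) * (θ⁻¹ ^ ℓ * (θ + (1 - θ) * b) ^ (n - r)) := by
        refine (measureReal_biUnion_finset_le _ _).trans (Finset.sum_le_sum fun T hT => ?_)
        obtain rfl := (Finset.mem_powersetCard.1 hT).2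
        exact gonMeasure_real_connected_le hK hp₀ hp₁ (Finset.card_pos.1 hr) hθ₀ hθ₁ hb
    _ = connectedSetBound n ℓ (pef K P p) θ b r := by
        rw [Finset.sum_const, Finset.card_powersetCard, Finset.card_fin, nsmul_eq_mul,
          connectedSetBound]

theorem gonMeasure_real_vertexConn_le (hK : K ≤ P) (hp₀ : 0 ≤ p) (hp₁ : p ≤ 1) (hℓ : ℓ < n)
    {θ b : ℕ → ℝ} (hθ₀ : ∀ r, 0 < θ r) (hθ₁ : ∀ r, θ r ≤ 1) (hb : ∀ r, 0 ≤ b r) :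
    (gonMeasure n K P p).real {ω | vertexConn (gonGraph ω) ≤ ℓ} ≤
      (rkgMeasure n K P).real {k | ∃ T : Finset (Fin n), T.Nonempty ∧
        b T.card < noLinkProb p k T} +
      ∑ r ∈ Finset.Icc 1 (n / 2), connectedSetBound n ℓ (pef K P p) (θ r) (b r) r := by
  have := isProbabilityMeasure_gonMeasure (n := n) hK hp₀ hp₁
  have := isProbabilityMeasure_uniformKeyMeasure hK
  have := isProbabilityMeasure_bern hp₀ hp₁
  set bad : Set (Fin n → KeyRing P K) :=
    {k | ∃ T : Finset (Fin n), T.Nonempty ∧ b T.card < noLinkProb p k T}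
  have hcover : {ω : GonSpace n K P | vertexConn (gonGraph ω) ≤ ℓ} ⊆ Prod.fst ⁻¹' bad ∪
      ⋃ r ∈ Finset.Icc 1 (n / 2), {ω | ∃ T : Finset (Fin n), T.card = r ∧
        noLinkProb p ω.1 T ≤ b r ∧ (outerNbrs (gonGraph ω) T).card ≤ ℓ ∧
        ((gonGraph ω).induce (T : Set (Fin n))).Connected} := by
    intro ω hω
    obtain ⟨T, hT, hcard, hconn, hout⟩ :=
      exists_connected_induce_card_outerNbrs_le hω (by rwa [Fintype.card_fin])
    rw [Fintype.card_fin] at hcard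
    rcases lt_or_ge (b T.card) (noLinkProb p ω.1 T) with h | h
    · exact .inl ⟨T, hT, h⟩
    · exact .inr (Set.mem_biUnion (x := T.card) (Finset.mem_Icc.2 ⟨hT.card_pos, by omega⟩)
        ⟨T, rfl, h, hout, hconn⟩)
  refine (measureReal_mono hcover (measure_ne_top _ _)).trans
    ((measureReal_union_le _ _).trans (add_le_add ?_ ?_))
  · exact ((measurePreserving_fst (μ := rkgMeasure n K P)
      (ν := Measure.pi fun _ : Sym2 (Fin n) => bern p)).measureReal_preimage
      MeasurableSet.of_discrete.nullMeasurableSet).le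
  · exact (measureReal_biUnion_finset_le _ _).trans <| Finset.sum_le_sum fun r hr =>
      gonMeasure_real_exists_connected_le hK hp₀ hp₁ (Finset.mem_Icc.1 hr).1 (hθ₀ r) (hθ₁ r) (hb r)

end UnionBound

section KeyUnion

variable {n P K : ℕ}

theorem rkgMeasure_real_card_keyUnion_le (hK : K ≤ P) (T : Finset (Fin n)) {m : ℕ} (hm : m ≤ P) :
    (rkgMeasure n K P).real {k | (keyUnion k T).card ≤ m} ≤
      P.choose m * ((m.choose K : ℝ) / P.choose K) ^ T.card := by
  have := isProbabilityMeasure_uniformKeyMeasure hK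
  have hsub : {k : Fin n → KeyRing P K | (keyUnion k T).card ≤ m} ⊆
      ⋃ D ∈ Finset.powersetCard m Finset.univ, (T : Set (Fin n)).pi fun _ => {x | x.1 ⊆ D} := by
    intro k hk
    obtain ⟨D, hD, -, hDm⟩ := Finset.exists_subsuperset_card_eq (keyUnion k T).subset_univ hk
      (by rwa [Finset.card_univ, Fintype.card_fin])
    exact Set.mem_biUnion (Finset.mem_powersetCard.2 ⟨D.subset_univ, hDm⟩) fun i hi =>
      (Finset.subset_biUnion_of_mem (fun i => (k i).1) hi).trans hD
  calc (rkgMeasure n K P).real {k | (keyUnion k T).card ≤ m}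
      ≤ ∑ _D ∈ Finset.powersetCard m (Finset.univ : Finset (Fin P)),
          ((m.choose K : ℝ) / P.choose K) ^ T.card := by
        refine (measureReal_mono hsub (measure_ne_top (Measure.pi _) _)).trans
          ((measureReal_biUnion_finset_le _ _).trans (Finset.sum_le_sum fun D hD => le_of_eq ?_))
        have hD' := (uniformKeyMeasure_real_subset (K := K) D)
        rw [(Finset.mem_powersetCard.1 hD).2] at hD'
        rw [measureReal_def, Measure.pi_pi_finset, ENNReal.toReal_prod]
        simp only [← measureReal_def, hD', Finset.prod_const]
    _ = P.choose m * ((m.choose K : ℝ) / P.choose K) ^ T.card := by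
        rw [Finset.sum_const, Finset.card_powersetCard, Finset.card_fin, nsmul_eq_mul]

theorem choose_mul_div_pow_le_exp (N r : ℕ) :
    (N.choose r : ℝ) * ((r : ℝ) / N) ^ r ≤ Real.exp r := by
  rcases N.eq_zero_or_pos with rfl | hN
  · cases r <;> simp [Real.exp_nonneg]
  calc (N.choose r : ℝ) * ((r : ℝ) / N) ^ r
      ≤ (N : ℝ) ^ r / r.factorial * ((r : ℝ) / N) ^ r := by
        gcongr
        exact Nat.choose_le_pow_div r N
    _ = (r : ℝ) ^ r / r.factorial := by
        rw [div_pow]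
        field_simp
    _ ≤ Real.exp r := Real.pow_div_factorial_le_exp _ r.cast_nonneg r

theorem choose_mul_choose_div_choose_pow_le {m r : ℕ} (hm : m ≤ K * r) (hr : K * r ≤ P) :
    (P.choose m : ℝ) * ((m.choose K : ℝ) / P.choose K) ^ r ≤
      Real.exp m * ((K * r : ℝ) / P) ^ (K * r - m) := by
  calc (P.choose m : ℝ) * ((m.choose K : ℝ) / P.choose K) ^ r
      ≤ P.choose m * (((m : ℝ) / P) ^ K) ^ r := by
        gcongr
        exact choose_div_choose_le_pow K (hm.trans hr)
    _ = P.choose m * ((m : ℝ) / P) ^ m * ((m : ℝ) / P) ^ (K * r - m) := by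
        rw [← pow_mul, mul_assoc, ← pow_add, Nat.add_sub_cancel' hm]
    _ ≤ Real.exp m * ((K * r : ℝ) / P) ^ (K * r - m) := by
        gcongr
        · exact choose_mul_div_pow_le_exp P m
        · exact_mod_cast hm

theorem choose_mul_pow_le (r : ℕ) (hn : (n : ℝ) ≤ Real.exp (K / 2) * P) :
    (n.choose r : ℝ) * ((K * r : ℝ) / P) ^ r ≤ Real.exp (3 / 2 * K) ^ r := by
  rcases n.eq_zero_or_pos with rfl | hn₀
  · rcases r.eq_zero_or_pos with rfl | hr
    · simp
    · simp only [Nat.choose_eq_zero_of_lt hr, Nat.cast_zero, zero_mul]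
      positivity
  have hP : (0 : ℝ) < P := by
    by_contra! h
    have hn' : (n : ℝ) ≤ 0 := hn.trans (mul_nonpos_of_nonneg_of_nonpos (Real.exp_nonneg _) h)
    exact (Nat.cast_pos.2 hn₀).not_ge hn'
  calc (n.choose r : ℝ) * ((K * r : ℝ) / P) ^ r
      = n.choose r * ((r : ℝ) / n) ^ r * (K * (n / P)) ^ r := by
        rw [mul_assoc, ← mul_pow]
        congr 2
        field_simp
    _ ≤ Real.exp r * (Real.exp (K - 1) * Real.exp (K / 2)) ^ r := by
        gcongr
        · exact choose_mul_div_pow_le_exp n r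
        · simpa using Real.add_one_le_exp ((K : ℝ) - 1)
        · rwa [div_le_iff₀ hP]
    _ = Real.exp (3 / 2 * K) ^ r := by
        rw [← Real.exp_add, ← Real.exp_nat_mul, ← Real.exp_nat_mul, ← Real.exp_add]
        ring_nf

theorem mul_le_of_le_exp_neg_mul {r : ℕ} (hr : (K * r : ℝ) ≤ Real.exp (-60) * P) : K * r ≤ P := by
  have hle : Real.exp (-60) * P ≤ P :=
    mul_le_of_le_one_left P.cast_nonneg (Real.exp_le_one_iff.2 (by norm_num))
  exact_mod_cast hr.trans hle

-- With `y = K * r / P ≤ exp (-60)`, repeating a tenth of the keys costs `y ^ (K * r / 10)`. One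
-- factor `y ^ r` absorbs the choice of the `r` vertices; as `r ≤ K * r / 20`, what remains is at
-- most `exp (-3 * K * r)`, which absorbs the choice of the keys.
theorem choose_mul_choose_mul_pow_le {m r : ℕ} (hK : 20 ≤ K)
    (hn : (n : ℝ) ≤ Real.exp (K / 2) * P) (hm : 10 * m ≤ 9 * (K * r))
    (hr : (K * r : ℝ) ≤ Real.exp (-60) * P) :
    (n.choose r : ℝ) * (P.choose m * ((m.choose K : ℝ) / P.choose K) ^ r) ≤
      Real.exp (-(K / 2)) ^ r := by
  have hKr : 20 * r ≤ K * r := Nat.mul_le_mul_right r hK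
  have hmr : r + (K * r - m - r) = K * r - m := by omega
  have hP : K * r ≤ P := mul_le_of_le_exp_neg_mul hr
  have hy : (K * r : ℝ) / P ≤ Real.exp (-60) := div_le_of_le_mul₀ P.cast_nonneg (by positivity) hr
  have hpow : ((K * r : ℝ) / P) ^ (K * r - m - r) ≤ Real.exp (-(3 * (K * r))) := by
    refine (pow_le_pow_left₀ (by positivity) hy _).trans ?_
    rw [← Real.exp_nat_mul, Real.exp_le_exp]
    have : K * r ≤ 20 * (K * r - m - r) := by omega
    have : (K * r : ℝ) ≤ 20 * (K * r - m - r : ℕ) := by exact_mod_cast this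
    linarith
  calc (n.choose r : ℝ) * (P.choose m * ((m.choose K : ℝ) / P.choose K) ^ r)
      ≤ n.choose r * (Real.exp m * ((K * r : ℝ) / P) ^ (K * r - m)) :=
        mul_le_mul_of_nonneg_left (choose_mul_choose_div_choose_pow_le (by omega) hP)
          (Nat.cast_nonneg _)
    _ = (n.choose r * ((K * r : ℝ) / P) ^ r) *
          (Real.exp m * ((K * r : ℝ) / P) ^ (K * r - m - r)) := by
        rw [← hmr, pow_add, hmr]
        ring
    _ ≤ Real.exp (3 / 2 * K) ^ r * (Real.exp (K * r) * Real.exp (-(3 * (K * r)))) := by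
        gcongr
        · exact choose_mul_pow_le r hn
        · exact_mod_cast (by omega : m ≤ K * r)
    _ = Real.exp (-(K / 2)) ^ r := by
        rw [← Real.exp_nat_mul, ← Real.exp_nat_mul, ← Real.exp_add, ← Real.exp_add]
        ring_nf

theorem rkgMeasure_real_exists_card_eq_le {r : ℕ} (hK : 20 ≤ K) (hKP : K ≤ P)
    (hn : (n : ℝ) ≤ Real.exp (K / 2) * P) (hr : (K * r : ℝ) ≤ Real.exp (-60) * P) :
    (rkgMeasure n K P).real {k | ∃ T : Finset (Fin n), T.card = r ∧
        10 * (keyUnion k T).card ≤ 9 * (K * r)} ≤ Real.exp (-(K / 2)) ^ r := by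
  have := isProbabilityMeasure_uniformKeyMeasure hKP
  have hP : K * r ≤ P := mul_le_of_le_exp_neg_mul hr
  calc _ ≤ (rkgMeasure n K P).real (⋃ T ∈ Finset.powersetCard r Finset.univ,
        {k : Fin n → KeyRing P K | (keyUnion k T).card ≤ 9 * (K * r) / 10}) := by
        refine measureReal_mono ?_ (measure_ne_top (Measure.pi _) _)
        rintro k ⟨T, hT, hunion⟩
        exact Set.mem_biUnion (Finset.mem_powersetCard.2 ⟨T.subset_univ, hT⟩)
          ((Nat.le_div_iff_mul_le (by norm_num)).2 (by linarith))
    _ ≤ ∑ _T ∈ Finset.powersetCard r (Finset.univ : Finset (Fin n)),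
        P.choose (9 * (K * r) / 10) *
          (((9 * (K * r) / 10).choose K : ℝ) / P.choose K) ^ r := by
        refine (measureReal_biUnion_finset_le _ _).trans (Finset.sum_le_sum fun T hT => ?_)
        obtain rfl := (Finset.mem_powersetCard.1 hT).2
        exact rkgMeasure_real_card_keyUnion_le hKP T (by omega)
    _ ≤ Real.exp (-(K / 2)) ^ r := by
        rw [Finset.sum_const, Finset.card_powersetCard, Finset.card_fin, nsmul_eq_mul]
        exact choose_mul_choose_mul_pow_le hK hn (by omega) hr

theorem rkgMeasure_real_exists_card_keyUnion_le {s : ℕ} (hK : 20 ≤ K) (hKP : K ≤ P)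
    (hn : (n : ℝ) ≤ Real.exp (K / 2) * P) (hs : (K * s : ℝ) ≤ Real.exp (-60) * P) :
    (rkgMeasure n K P).real {k | ∃ T : Finset (Fin n), T.Nonempty ∧ T.card ≤ s ∧
        10 * (keyUnion k T).card ≤ 9 * (K * T.card)} ≤ 2 * Real.exp (-(K / 2)) := by
  have := isProbabilityMeasure_uniformKeyMeasure hKP
  have hexp : Real.exp (-(K / 2)) ≤ 1 / 2 := by
    have hK' : (20 : ℝ) ≤ K := by exact_mod_cast hK
    rw [Real.exp_neg, one_div]
    exact inv_anti₀ two_pos (by linarith [Real.add_one_le_exp ((K : ℝ) / 2)])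
  calc _ ≤ (rkgMeasure n K P).real (⋃ r ∈ Finset.Icc 1 s, {k | ∃ T : Finset (Fin n),
        T.card = r ∧ 10 * (keyUnion k T).card ≤ 9 * (K * r)}) := by
        refine measureReal_mono ?_ (measure_ne_top (Measure.pi _) _)
        rintro k ⟨T, hT, hTs, hunion⟩
        exact Set.mem_biUnion (Finset.mem_Icc.2 ⟨hT.card_pos, hTs⟩) ⟨T, rfl, hunion⟩
    _ ≤ ∑ r ∈ Finset.Icc 1 s, Real.exp (-(K / 2)) ^ r := by
        refine (measureReal_biUnion_finset_le _ _).trans (Finset.sum_le_sum fun r hr => ?_)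
        have hrs : (r : ℝ) ≤ s := by exact_mod_cast (Finset.mem_Icc.1 hr).2
        exact rkgMeasure_real_exists_card_eq_le hK hKP hn (hs.trans' (by gcongr))
    _ ≤ 2 * Real.exp (-(K / 2)) := by
        rw [← Finset.Ico_add_one_right_eq_Icc]
        refine (geom_sum_Ico_le_of_lt_one (by positivity) (by linarith)).trans ?_
        rw [pow_one, div_le_iff₀ (by linarith)]
        nlinarith [Real.exp_pos (-((K : ℝ) / 2))]

end KeyUnion

section MissBound

variable {V : Type*} {P K : ℕ} {p : ℝ}

theorem half_min_mul_one_le_one_sub_pow (hp₀ : 0 ≤ p) (hp₁ : p ≤ 1) (g : ℕ) :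
    min (g * p) 1 / 2 ≤ 1 - (1 - p) ^ g := by
  refine (half_min_one_le_one_sub_exp_neg (by positivity)).trans (sub_le_sub_left ?_ 1)
  calc (1 - p) ^ g ≤ Real.exp (-p) ^ g :=
        pow_le_pow_left₀ (sub_nonneg.2 hp₁) (Real.one_sub_le_exp_neg p) g
    _ = Real.exp (-(g * p)) := by rw [← Real.exp_nat_mul, mul_neg]

theorem noLinkProb_le_exp_of_card_keyUnion (hK : K ≤ P) (hK₀ : 0 < K) (hp₀ : 0 ≤ p) (hp₁ : p ≤ 1)
    {k : V → KeyRing P K} {T : Finset V} (hT : 9 * (K * T.card) ≤ 10 * (keyUnion k T).card) :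
    noLinkProb p k T ≤ Real.exp (-(9 / 10 * (T.card * pef K P p))) := by
  refine (noLinkProb_le_exp_card_keyUnion hK hp₀ hp₁ k T).trans (Real.exp_le_exp.2 (neg_le_neg ?_))
  have hq : 0 ≤ pef K P p := mul_nonneg hp₀ (psf_nonneg hK)
  have hT' : (9 * (K * T.card) : ℝ) ≤ 10 * (keyUnion k T).card := by exact_mod_cast hT
  rw [le_div_iff₀ (Nat.cast_pos.2 hK₀)]
  change _ ≤ pef K P p * _
  linarith [mul_le_mul_of_nonneg_left hT' hq]

/-- The bound for `noLinkProb` of an `r`-set of vertices that holds with high probability, where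
`q` is the edge probability. The `9 / 10` is the fraction of distinct keys among those held by a
typical set; for large sets, `9 / 40` pays two further factors `1 / 2`, one for cutting the set into
blocks of bounded size and one for `1 - (1 - p) ^ g` against `min (g * p) 1`. The exponent is capped
because even with all channels on, a block can fail to share a key with probability of order 1. -/
def missBound (q : ℝ) (r : ℕ) : ℝ :=
  if r = 1 then 1 - q
  else if r < 300 then Real.exp (-(9 / 10 * (r * q)))
  else Real.exp (-min (9 / 40 * (r * q)) 3)

theorem missBound_nonneg {q : ℝ} (hq : q ≤ 1) (r : ℕ) : 0 ≤ missBound q r := by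
  unfold missBound
  split_ifs
  · exact sub_nonneg.2 hq
  · positivity
  · positivity

theorem exists_finpartition_le_card [DecidableEq V] {s : ℕ} (hs : 0 < s) {T : Finset V}
    (hT : s ≤ T.card) : ∃ Q : Finpartition T, Q.parts.Nonempty ∧ (∀ B ∈ Q.parts, s ≤ B.card) ∧
      T.card ≤ 2 * (Q.parts.card * s) := by
  have hg : 0 < T.card / s := Nat.div_pos hT hs
  obtain ⟨Q, hQ, hQcard⟩ := Finpartition.exists_equipartition_card_eq T hg.ne'
    (Nat.div_le_self _ _)
  refine ⟨Q, Finset.card_pos.1 (hQcard ▸ hg), fun B hB => ?_, ?_⟩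
  · refine le_trans ?_ (hQ.average_le_card_part hB)
    rw [hQcard, Nat.le_div_iff_mul_le hg, mul_comm]
    exact Nat.div_mul_le_self _ _
  · rw [hQcard]
    have := Nat.lt_div_mul_add hs (a := T.card)
    nlinarith

theorem noLinkProb_le_exp_of_le_card (hK : K ≤ P) (hK₀ : 0 < K) (hp₀ : 0 ≤ p) (hp₁ : p ≤ 1)
    {k : V → KeyRing P K} {s : ℕ} (hs : 3 ≤ 9 / 20 * (psf K P * s))
    (htyp : ∀ T : Finset V, T.card = s → 9 * (K * T.card) ≤ 10 * (keyUnion k T).card)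
    {T : Finset V} (hT : s ≤ T.card) :
    noLinkProb p k T ≤ Real.exp (-min (9 / 40 * (T.card * pef K P p)) 3) := by
  classical
  have hs₀ : 0 < s := Nat.pos_of_ne_zero fun h => by norm_num [h] at hs
  obtain ⟨Q, hQ, hsQ, hTQ⟩ := exists_finpartition_le_card hs₀ hT
  refine noLinkProb_le_of_finpartition hK hp₁ Q hQ fun B hB => ?_
  obtain ⟨B', hB'B, hB'⟩ := Finset.exists_subset_card_eq (hsQ B hB)
  set g := Q.parts.card
  set p' := 1 - (1 - p) ^ g
  have hp' : min (g * p) 1 / 2 ≤ p' := half_min_mul_one_le_one_sub_pow hp₀ hp₁ _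
  have hp'₀ : 0 ≤ p' := hp'.trans' (by positivity)
  have hp'₁ : p' ≤ 1 := sub_le_self _ (pow_nonneg (sub_nonneg.2 hp₁) _)
  refine (noLinkProb_anti hK hp'₀ hp'₁ k hB'B).trans
    ((noLinkProb_le_exp_of_card_keyUnion hK hK₀ hp'₀ hp'₁ (htyp B' hB')).trans
      (Real.exp_le_exp.2 (neg_le_neg ?_)))
  have hpsf := psf_nonneg hK
  have hTg : (T.card : ℝ) ≤ 2 * (g * s) := by exact_mod_cast hTQ
  calc min (9 / 40 * (T.card * pef K P p)) 3
      ≤ min (9 / 20 * (psf K P * s) * (g * p)) (9 / 20 * (psf K P * s) * 1) := by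
        refine min_le_min ?_ (by linarith)
        have := mul_le_mul_of_nonneg_right hTg (mul_nonneg hp₀ hpsf)
        rw [pef]
        linarith
    _ = 9 / 10 * (s * (min (g * p) 1 / 2 * psf K P)) := by
        rw [← mul_min_of_nonneg _ _ (by positivity)]
        ring
    _ ≤ 9 / 10 * (B'.card * pef K P p') := by
        rw [hB', pef]
        gcongr

theorem noLinkProb_le_missBound (hK : K ≤ P) (hK₀ : 0 < K) (hp₀ : 0 ≤ p) (hp₁ : p ≤ 1)
    {k : V → KeyRing P K} {s : ℕ} (hs₃₀₀ : 300 ≤ s) (hs : 3 ≤ 9 / 20 * (psf K P * s))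
    (htyp : ∀ T : Finset V, T.Nonempty → T.card ≤ s →
      9 * (K * T.card) ≤ 10 * (keyUnion k T).card) {T : Finset V} (hT : T.Nonempty) :
    noLinkProb p k T ≤ missBound (pef K P p) T.card := by
  unfold missBound
  split_ifs with h₁ h₃₀₀
  · obtain ⟨i, rfl⟩ := Finset.card_eq_one.1 h₁
    exact (noLinkProb_singleton hK p k i).le
  · exact noLinkProb_le_exp_of_card_keyUnion hK hK₀ hp₀ hp₁ (htyp T hT (by omega))
  · rcases le_or_gt s T.card with h | h
    · refine noLinkProb_le_exp_of_le_card hK hK₀ hp₀ hp₁ hs (fun B hB => ?_) h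
      exact htyp B (Finset.card_pos.1 (by omega)) hB.le
    · refine (noLinkProb_le_exp_of_card_keyUnion hK hK₀ hp₀ hp₁ (htyp T hT h.le)).trans
        (Real.exp_le_exp.2 (neg_le_neg ((min_le_left _ _).trans ?_)))
      have hq : 0 ≤ T.card * pef K P p :=
        mul_nonneg T.card.cast_nonneg (mul_nonneg hp₀ (psf_nonneg hK))
      linarith

theorem exists_block_size {K P : ℕ} (hK : 40 * Real.exp 60 ≤ K)
    (hP : 301 * Real.exp 60 * K ≤ P) : ∃ s : ℕ, 300 ≤ s ∧ (K * s : ℝ) ≤ Real.exp (-60) * P ∧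
      3 ≤ 9 / 20 * (psf K P * s) := by
  have hK₀ : (0 : ℝ) < K := lt_of_lt_of_le (by positivity) hK
  have hP₀ : (0 : ℝ) < P := lt_of_lt_of_le (by positivity) hP
  have hexp : Real.exp (-60) * Real.exp 60 = 1 := by rw [← Real.exp_add]; norm_num
  have hKP : K ≤ P := by
    have : (1 : ℝ) ≤ 301 * Real.exp 60 := by linarith [Real.add_one_le_exp (60 : ℝ)]
    exact_mod_cast (le_mul_of_one_le_left hK₀.le this).trans hP
  set y : ℝ := Real.exp (-60) * P / K
  have hy : 301 ≤ y := by
    rw [le_div_iff₀ hK₀]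
    nlinarith [Real.exp_pos (-60)]
  have hKy : K * y = Real.exp (-60) * P := mul_div_cancel₀ _ hK₀.ne'
  have hfloor : 300 / 301 * y ≤ ⌊y⌋₊ := by linarith [Nat.lt_floor_add_one y]
  refine ⟨⌊y⌋₊, Nat.le_floor (by norm_num; linarith), ?_, ?_⟩
  · rw [← hKy]
    gcongr
    exact Nat.floor_le (by positivity)
  · have hsq : 300 / 301 * 40 ≤ (K : ℝ) ^ 2 / P * ⌊y⌋₊ :=
      calc (300 / 301 * 40 : ℝ) ≤ 300 / 301 * (Real.exp (-60) * K) := by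
            nlinarith [Real.exp_pos (-60)]
        _ = (K : ℝ) ^ 2 / P * (300 / 301 * y) := by
            simp only [y]
            field_simp
        _ ≤ (K : ℝ) ^ 2 / P * ⌊y⌋₊ := by gcongr
    have hmin : 39 ≤ min ((K : ℝ) ^ 2 / P) 1 * ⌊y⌋₊ := by
      rw [min_mul_of_nonneg _ _ (Nat.cast_nonneg _)]
      exact le_min (by linarith) (by linarith)
    have := mul_le_mul_of_nonneg_right (half_min_one_le_psf hKP) (Nat.cast_nonneg (α := ℝ) ⌊y⌋₊)
    linarith

theorem rkgMeasure_real_exists_missBound_lt_le {n : ℕ} (hp₀ : 0 ≤ p) (hp₁ : p ≤ 1)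
    (hK : 40 * Real.exp 60 ≤ K) (hP : 301 * Real.exp 60 * K ≤ P)
    (hn : (n : ℝ) ≤ Real.exp (K / 2) * P) :
    (rkgMeasure n K P).real {k | ∃ T : Finset (Fin n), T.Nonempty ∧
        missBound (pef K P p) T.card < noLinkProb p k T} ≤ 2 * Real.exp (-(K / 2)) := by
  have h60 : (1 : ℝ) ≤ Real.exp 60 := Real.one_le_exp (by norm_num)
  have hK₂₀ : 20 ≤ K := by exact_mod_cast (by linarith : (20 : ℝ) ≤ K)
  have hKP : K ≤ P := by exact_mod_cast (by nlinarith : (K : ℝ) ≤ P)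
  have := isProbabilityMeasure_uniformKeyMeasure hKP
  obtain ⟨s, hs₃₀₀, hKs, hs⟩ := exists_block_size hK hP
  refine (measureReal_mono ?_ (measure_ne_top (Measure.pi _) _)).trans
    (rkgMeasure_real_exists_card_keyUnion_le hK₂₀ hKP hn hKs)
  rintro k ⟨T, hT, hlt⟩
  by_contra htyp
  simp only [Set.mem_ofPred_eq, not_exists, not_and, not_le] at htyp
  exact hlt.not_ge <| noLinkProb_le_missBound hKP (by omega) hp₀ hp₁ hs₃₀₀ hs
    (fun B hB hBs => (htyp B hB hBs).le) hT

end MissBound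

section ConnectedSetBound

variable {n ℓ r : ℕ} {q : ℝ}

theorem mix_pow_le_exp {θ u v : ℝ} (hθ₀ : 0 ≤ θ) (hθ₁ : θ ≤ 1) (hu : 0 ≤ u) (huv : u ≤ v)
    (m : ℕ) : (θ + (1 - θ) * Real.exp (-u)) ^ m ≤ Real.exp (-(m * ((1 - θ) * u / (1 + v)))) := by
  have hexp : Real.exp (-u) ≤ 1 - u / (1 + v) := by
    calc Real.exp (-u) ≤ (1 + u)⁻¹ := by
          rw [Real.exp_neg]
          exact inv_anti₀ (by linarith) (by linarith [Real.add_one_le_exp u])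
      _ = 1 - u / (1 + u) := by field_simp; ring
      _ ≤ 1 - u / (1 + v) := by gcongr
  have := sub_nonneg.2 hθ₁
  calc (θ + (1 - θ) * Real.exp (-u)) ^ m
      ≤ Real.exp (-((1 - θ) * u / (1 + v))) ^ m := by
        gcongr
        calc θ + (1 - θ) * Real.exp (-u) ≤ θ + (1 - θ) * (1 - u / (1 + v)) := by gcongr
          _ = 1 - (1 - θ) * u / (1 + v) := by ring
          _ ≤ Real.exp (-((1 - θ) * u / (1 + v))) := Real.one_sub_le_exp_neg _
    _ = Real.exp (-(m * ((1 - θ) * u / (1 + v)))) := by rw [← Real.exp_nat_mul, mul_neg]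

theorem choose_mul_pow_pred_le (hr : 1 ≤ r) (hq : 0 ≤ q) (hx : 1 ≤ n * q) :
    (n.choose r : ℝ) * (r * q) ^ (r - 1) ≤ n * (Real.exp 1 * (n * q)) ^ r := by
  have hn : (n : ℝ) ≠ 0 := fun h => by norm_num [h] at hx
  have hr' : (1 : ℝ) ≤ r := by exact_mod_cast hr
  calc (n.choose r : ℝ) * (r * q) ^ (r - 1)
      ≤ n.choose r * (r * q) ^ (r - 1) * (r * (n * q)) :=
        le_mul_of_one_le_right (by positivity) (one_le_mul_of_one_le_of_one_le hr' hx)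
    _ = n * (n.choose r * (r * q) ^ (r - 1 + 1)) := by ring
    _ = n * (n.choose r * ((r : ℝ) / n) ^ r * (n * q) ^ r) := by
        rw [Nat.sub_add_cancel hr, mul_assoc _ (_ ^ r), ← mul_pow]
        congr 3
        field_simp
    _ ≤ n * (Real.exp r * (n * q) ^ r) := by
        gcongr
        exact choose_mul_div_pow_le_exp n r
    _ = n * (Real.exp 1 * (n * q)) ^ r := by
        rw [mul_pow (Real.exp 1), ← Real.exp_nat_mul, mul_one]

-- With `θ = x⁻¹`, `x = n * q`, the Markov weight `θ⁻¹ ^ ℓ` is `x ^ ℓ`, the order of the true count,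
-- while replacing `1 - q` by `θ + (1 - θ) * (1 - q)` costs only a bounded factor.
theorem connectedSetBound_one_le (hq : q ≤ 1) (hx : 1 ≤ n * q) :
    connectedSetBound n ℓ q (n * q)⁻¹ (missBound q 1) 1 ≤
      n * ((n * q) ^ ℓ * Real.exp (2 - n * q)) := by
  have hn : 1 ≤ n := Nat.one_le_iff_ne_zero.2 fun h => by norm_num [h] at hx
  have hn' : (0 : ℝ) < n := Nat.cast_pos.2 hn
  have hq₀ : q ≠ 0 := fun h => by norm_num [h] at hx
  have hmix : (n * q)⁻¹ + (1 - (n * q)⁻¹) * (1 - q) = 1 - (q - (n : ℝ)⁻¹) := by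
    field_simp
    ring
  have hmix₀ : 0 ≤ (n * q)⁻¹ + (1 - (n * q)⁻¹) * (1 - q) :=
    add_nonneg (by positivity) <|
      mul_nonneg (sub_nonneg.2 (inv_le_one_of_one_le₀ hx)) (sub_nonneg.2 hq)
  simp only [connectedSetBound, missBound, if_true, Nat.choose_one_right, Nat.sub_self, pow_zero,
    min_self, one_mul, inv_inv]
  gcongr
  calc ((n * q)⁻¹ + (1 - (n * q)⁻¹) * (1 - q)) ^ (n - 1)
      ≤ Real.exp (-(q - (n : ℝ)⁻¹)) ^ (n - 1) :=
        pow_le_pow_left₀ hmix₀ (hmix ▸ Real.one_sub_le_exp_neg _) _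
    _ ≤ Real.exp (2 - n * q) := by
        rw [← Real.exp_nat_mul, Real.exp_le_exp, Nat.cast_sub hn, Nat.cast_one]
        have : (n : ℝ) * (n : ℝ)⁻¹ = 1 := mul_inv_cancel₀ hn'.ne'
        nlinarith [inv_pos.2 hn']

theorem connectedSetBound_le_mul {θ b A B : ℝ} (hθ₀ : 0 ≤ θ) (hθ₁ : θ ≤ 1) (hb : 0 ≤ b)
    (hA : n.choose r * min 1 ((r * q) ^ (r - 1)) ≤ A) (hB : (θ + (1 - θ) * b) ^ (n - r) ≤ B)
    (hA₀ : 0 ≤ A) : connectedSetBound n ℓ q θ b r ≤ θ⁻¹ ^ ℓ * (A * B) := by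
  have := sub_nonneg.2 hθ₁
  calc connectedSetBound n ℓ q θ b r
      = θ⁻¹ ^ ℓ * (n.choose r * min 1 ((r * q) ^ (r - 1)) * (θ + (1 - θ) * b) ^ (n - r)) := by
        rw [connectedSetBound]
        ring
    _ ≤ θ⁻¹ ^ ℓ * (A * B) := by gcongr

section SmallSets

theorem mix_missBound_pow_le_of_lt {v : ℝ} (hn : 3000 ≤ n) (hr₂ : 2 ≤ r) (hr : r < 300)
    (hq₀ : 0 ≤ q) (hqv : 9 / 5 * q ≤ v) :
    (16⁻¹ + (1 - 16⁻¹) * missBound q r) ^ (n - r) ≤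
      Real.exp (-(243 / 160 * (n * q) / (1 + v))) := by
  have hr₂' : (2 : ℝ) ≤ r := by exact_mod_cast hr₂
  have hv : 0 < 1 + v := by linarith
  have hnr : 9 / 10 * (n : ℝ) ≤ (n - r : ℕ) := by
    have : (9 * n : ℝ) ≤ 10 * (n - r : ℕ) := by
      exact_mod_cast (by omega : 9 * n ≤ 10 * (n - r))
    linarith
  have hmiss : missBound q r ≤ Real.exp (-(9 / 5 * q)) := by
    rw [missBound, if_neg (by omega), if_pos hr, Real.exp_le_exp]
    nlinarith
  calc (16⁻¹ + (1 - 16⁻¹) * missBound q r) ^ (n - r)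
      ≤ (16⁻¹ + (1 - 16⁻¹) * Real.exp (-(9 / 5 * q))) ^ (n - r) := by
        have : 0 ≤ missBound q r := by
          rw [missBound, if_neg (by omega), if_pos hr]
          positivity
        have : (0 : ℝ) ≤ 1 - 16⁻¹ := by norm_num
        gcongr
    _ ≤ Real.exp (-((n - r : ℕ) * ((1 - 16⁻¹) * (9 / 5 * q) / (1 + v)))) :=
        mix_pow_le_exp (by norm_num) (by norm_num) (by positivity) hqv _
    _ ≤ Real.exp (-(9 / 10 * n * ((1 - 16⁻¹) * (9 / 5 * q) / (1 + v)))) := by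
        have : (0 : ℝ) ≤ (1 - 16⁻¹) * (9 / 5 * q) / (1 + v) := by
          norm_num
          positivity
        gcongr
    _ = Real.exp (-(243 / 160 * (n * q) / (1 + v))) := by ring_nf

theorem connectedSetBound_le_of_lt_of_le (hn : 3000 ≤ n) (hr₂ : 2 ≤ r) (hr : r < 300)
    (hq₀ : 0 ≤ q) (hq : q ≤ 1 / 36) (hx : 1 ≤ n * q) (hnx : n ≤ Real.exp (n * q)) :
    connectedSetBound n ℓ q 16⁻¹ (missBound q r) r ≤
      16 ^ ℓ * ((36 * (n * q)) ^ 300 * Real.exp (-(2 / 5 * (n * q)))) := by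
  have hsets : n.choose r * min 1 ((r * q) ^ (r - 1)) ≤
      Real.exp (n * q) * (36 * (n * q)) ^ 300 :=
    calc n.choose r * min 1 ((r * q) ^ (r - 1))
        ≤ n.choose r * (r * q) ^ (r - 1) := by gcongr; exact min_le_right _ _
      _ ≤ n * (Real.exp 1 * (n * q)) ^ r := choose_mul_pow_pred_le (by omega) hq₀ hx
      _ ≤ n * (36 * (n * q)) ^ r := by gcongr; linarith [Real.exp_one_lt_d9]
      _ ≤ Real.exp (n * q) * (36 * (n * q)) ^ 300 := by gcongr; linarith
  have hmix : (16⁻¹ + (1 - 16⁻¹) * missBound q r) ^ (n - r) ≤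
      Real.exp (-(7 / 5 * (n * q))) := by
    refine (mix_missBound_pow_le_of_lt (v := 1 / 20) hn hr₂ hr hq₀ (by linarith)).trans ?_
    rw [Real.exp_le_exp]
    norm_num
    linarith
  calc connectedSetBound n ℓ q 16⁻¹ (missBound q r) r
      ≤ 16⁻¹⁻¹ ^ ℓ *
        (Real.exp (n * q) * (36 * (n * q)) ^ 300 * Real.exp (-(7 / 5 * (n * q)))) :=
        connectedSetBound_le_mul (by norm_num) (by norm_num)
          (missBound_nonneg (by linarith) r) hsets hmix (by positivity)
    _ = 16 ^ ℓ * ((36 * (n * q)) ^ 300 * Real.exp (n * q + -(7 / 5 * (n * q)))) := by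
        rw [inv_inv, Real.exp_add, mul_assoc (Real.exp _), mul_left_comm (Real.exp _)]
    _ = 16 ^ ℓ * ((36 * (n * q)) ^ 300 * Real.exp (-(2 / 5 * (n * q)))) := by
        congr 3
        ring

theorem connectedSetBound_le_of_lt_of_lt (hn : 3000 ≤ n) (hr₂ : 2 ≤ r) (hr : r < 300)
    (hq : 1 / 36 < q) (hq₁ : q ≤ 1) :
    connectedSetBound n ℓ q 16⁻¹ (missBound q r) r ≤
      16 ^ ℓ * ((36 * (n * q)) ^ 300 * Real.exp (-(2 / 5 * (n * q)))) := by
  have hn' : (3000 : ℝ) ≤ n := by exact_mod_cast hn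
  have hnx : (n : ℝ) ≤ 36 * (n * q) := by nlinarith
  have hsets : n.choose r * min 1 ((r * q) ^ (r - 1)) ≤ (36 * (n * q)) ^ 300 :=
    calc n.choose r * min 1 ((r * q) ^ (r - 1))
        ≤ n.choose r := mul_le_of_le_one_right (by positivity) (min_le_left _ _)
      _ ≤ (n : ℝ) ^ r := by exact_mod_cast Nat.choose_le_pow n r
      _ ≤ (36 * (n * q)) ^ r := by gcongr
      _ ≤ (36 * (n * q)) ^ 300 := by gcongr; linarith
  have hmix : (16⁻¹ + (1 - 16⁻¹) * missBound q r) ^ (n - r) ≤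
      Real.exp (-(2 / 5 * (n * q))) := by
    refine (mix_missBound_pow_le_of_lt (v := 9 / 5) hn hr₂ hr (by linarith)
      (by linarith)).trans ?_
    rw [Real.exp_le_exp]
    norm_num
    linarith
  simpa only [inv_inv] using connectedSetBound_le_mul (ℓ := ℓ) (by norm_num) (by norm_num)
    (missBound_nonneg hq₁ r) hsets hmix (by positivity)

theorem connectedSetBound_le_of_lt (hn : 3000 ≤ n) (hr₂ : 2 ≤ r) (hr : r < 300) (hq₀ : 0 ≤ q)
    (hq₁ : q ≤ 1) (hx : 1 ≤ n * q) (hnx : n ≤ Real.exp (n * q)) :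
    connectedSetBound n ℓ q 16⁻¹ (missBound q r) r ≤
      16 ^ ℓ * ((36 * (n * q)) ^ 300 * Real.exp (-(2 / 5 * (n * q)))) :=
  (le_or_gt q (1 / 36)).elim
    (fun hq => connectedSetBound_le_of_lt_of_le hn hr₂ hr hq₀ hq hx hnx)
    (fun hq => connectedSetBound_le_of_lt_of_lt hn hr₂ hr hq hq₁)

end SmallSets

section LargeSets

theorem connectedSetBound_le_of_ge_of_mul_le (hr : 300 ≤ r) (hrn : 2 * r ≤ n) (hq₀ : 0 ≤ q)
    (hq₁ : q ≤ 1) (hrq : 9 / 40 * (r * q) ≤ 3) (hx : 1 ≤ n * q)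
    (hnx : n ≤ Real.exp (n * q))
    (hexp : Real.exp 1 * (n * q) ≤ Real.exp (n * q / 80)) :
    connectedSetBound n ℓ q 16⁻¹ (missBound q r) r ≤ 16 ^ ℓ * ((n : ℝ) ^ 2)⁻¹ := by
  have hr' : (300 : ℝ) ≤ r := by exact_mod_cast hr
  have hn : (0 : ℝ) < n := by exact_mod_cast (by omega : 0 < n)
  have hnr : (n : ℝ) / 2 ≤ (n - r : ℕ) := by
    have : (n : ℝ) ≤ 2 * (n - r : ℕ) := by exact_mod_cast (by omega : n ≤ 2 * (n - r))
    linarith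
  have hsets : n.choose r * min 1 ((r * q) ^ (r - 1)) ≤ n * Real.exp (r * (n * q / 80)) :=
    calc n.choose r * min 1 ((r * q) ^ (r - 1))
        ≤ n.choose r * (r * q) ^ (r - 1) := by gcongr; exact min_le_right _ _
      _ ≤ n * (Real.exp 1 * (n * q)) ^ r := choose_mul_pow_pred_le (by omega) hq₀ hx
      _ ≤ n * Real.exp (r * (n * q / 80)) := by
        rw [Real.exp_nat_mul]
        gcongr
  have hmix : (16⁻¹ + (1 - 16⁻¹) * missBound q r) ^ (n - r) ≤
      Real.exp (-(r * (n * q / 40))) := by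
    rw [missBound, if_neg (by omega), if_neg (by omega), min_eq_left hrq]
    refine (mix_pow_le_exp (by norm_num) (by norm_num) (by positivity) hrq _).trans ?_
    rw [Real.exp_le_exp]
    nlinarith [mul_le_mul_of_nonneg_right hnr (by positivity : 0 ≤ r * q),
      (by positivity : 0 ≤ r * (n * q))]
  calc connectedSetBound n ℓ q 16⁻¹ (missBound q r) r
      ≤ 16⁻¹⁻¹ ^ ℓ * (n * Real.exp (r * (n * q / 80)) * Real.exp (-(r * (n * q / 40)))) :=
        connectedSetBound_le_mul (by norm_num) (by norm_num) (missBound_nonneg hq₁ r)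
          hsets hmix (by positivity)
    _ = 16 ^ ℓ * (n * Real.exp (-(r * (n * q / 80)))) := by
        rw [inv_inv, mul_assoc (n : ℝ), ← Real.exp_add]
        ring_nf
    _ ≤ 16 ^ ℓ * (n * Real.exp (-(3 * (n * q)))) := by
        have : 3 * (n * q) ≤ r * (n * q / 80) := by nlinarith
        gcongr
    _ = 16 ^ ℓ * (n * (Real.exp (n * q) ^ 3)⁻¹) := by
        rw [Real.exp_neg, ← Real.exp_nat_mul]
        norm_cast
    _ ≤ 16 ^ ℓ * (n * ((n : ℝ) ^ 3)⁻¹) := by gcongr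
    _ = 16 ^ ℓ * ((n : ℝ) ^ 2)⁻¹ := by field_simp

theorem two_pow_mul_inv_eight_pow_le (hn₀ : 0 < n) (hrn : 2 * r ≤ n)
    (hn : (n : ℝ) ^ 2 ≤ Real.exp (n / 3)) :
    (2 : ℝ) ^ n * 8⁻¹ ^ (n - r) ≤ ((n : ℝ) ^ 2)⁻¹ := by
  have hn₀' : (0 : ℝ) < n := Nat.cast_pos.2 hn₀
  have hexp : Real.exp (n / 3) ≤ 2 ^ (n - r) :=
    calc Real.exp (n / 3) ≤ Real.exp ((n - r : ℕ) * Real.log 2) := by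
          have : (n : ℝ) ≤ 2 * (n - r : ℕ) := by exact_mod_cast (by omega : n ≤ 2 * (n - r))
          rw [Real.exp_le_exp]
          nlinarith [Real.log_two_gt_d9]
      _ = 2 ^ (n - r) := by rw [Real.exp_nat_mul, Real.exp_log two_pos]
  calc (2 : ℝ) ^ n * 8⁻¹ ^ (n - r) ≤ 2 ^ (2 * (n - r)) * 8⁻¹ ^ (n - r) := by
        gcongr
        · norm_num
        · omega
    _ = (2 ^ (n - r))⁻¹ := by
        rw [pow_mul, ← mul_pow, ← inv_pow]
        norm_num
    _ ≤ ((n : ℝ) ^ 2)⁻¹ := by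
        gcongr
        exact hn.trans hexp

theorem connectedSetBound_le_of_ge_of_le_mul (hr : 300 ≤ r) (hrn : 2 * r ≤ n)
    (hq₁ : q ≤ 1) (hrq : 3 ≤ 9 / 40 * (r * q)) (hn : (n : ℝ) ^ 2 ≤ Real.exp (n / 3)) :
    connectedSetBound n ℓ q 16⁻¹ (missBound q r) r ≤ 16 ^ ℓ * ((n : ℝ) ^ 2)⁻¹ := by
  have hsets : n.choose r * min 1 ((r * q) ^ (r - 1)) ≤ (2 : ℝ) ^ n :=
    calc n.choose r * min 1 ((r * q) ^ (r - 1))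
        ≤ n.choose r := mul_le_of_le_one_right (by positivity) (min_le_left _ _)
      _ ≤ (2 : ℝ) ^ n := by exact_mod_cast Nat.choose_le_two_pow n r
  have hmiss : missBound q r ≤ 15⁻¹ := by
    rw [missBound, if_neg (by omega), if_neg (by omega), min_eq_right hrq, Real.exp_neg]
    gcongr
    calc (15 : ℝ) ≤ 2.7 ^ 3 := by norm_num
      _ ≤ Real.exp 1 ^ 3 := by gcongr; linarith [Real.exp_one_gt_d9]
      _ = Real.exp 3 := by
        rw [← Real.exp_nat_mul]
        norm_num
  have hmix : (16⁻¹ + (1 - 16⁻¹) * missBound q r) ^ (n - r) ≤ 8⁻¹ ^ (n - r) := by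
    have := missBound_nonneg hq₁ r
    exact pow_le_pow_left₀ (by linarith) (by linarith) _
  calc connectedSetBound n ℓ q 16⁻¹ (missBound q r) r
      ≤ 16⁻¹⁻¹ ^ ℓ * (2 ^ n * 8⁻¹ ^ (n - r)) :=
        connectedSetBound_le_mul (by norm_num) (by norm_num) (missBound_nonneg hq₁ r)
          hsets hmix (by positivity)
    _ ≤ 16 ^ ℓ * ((n : ℝ) ^ 2)⁻¹ := by
        rw [inv_inv]
        gcongr
        exact two_pow_mul_inv_eight_pow_le (by omega) hrn hn

theorem connectedSetBound_le_of_ge (hr : 300 ≤ r) (hrn : 2 * r ≤ n) (hq₀ : 0 ≤ q) (hq₁ : q ≤ 1)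
    (hx : 1 ≤ n * q) (hnx : n ≤ Real.exp (n * q))
    (hexp : Real.exp 1 * (n * q) ≤ Real.exp (n * q / 80))
    (hn : (n : ℝ) ^ 2 ≤ Real.exp (n / 3)) :
    connectedSetBound n ℓ q 16⁻¹ (missBound q r) r ≤ 16 ^ ℓ * ((n : ℝ) ^ 2)⁻¹ :=
  (le_total (9 / 40 * (r * q)) 3).elim
    (fun hrq => connectedSetBound_le_of_ge_of_mul_le hr hrn hq₀ hq₁ hrq hx hnx hexp)
    (fun hrq => connectedSetBound_le_of_ge_of_le_mul hr hrn hq₁ hrq hn)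

end LargeSets

theorem sum_Icc_one_le_add {f : ℕ → ℝ} {A B C : ℝ} {m s : ℕ} (hA : 0 ≤ A) (hB : 0 ≤ B)
    (hC : 0 ≤ C) (h₁ : f 1 ≤ A) (h₂ : ∀ r, 2 ≤ r → r < s → f r ≤ B)
    (h₃ : ∀ r, s ≤ r → r ≤ m → f r ≤ C) :
    ∑ r ∈ Finset.Icc 1 m, f r ≤ A + s * B + m * C := by
  have hle : ∀ r ∈ Finset.Icc 1 m,
      f r ≤ (if r = 1 then A else 0) + (if r < s then B else 0) + C := by
    intro r hr
    obtain ⟨hr₁, hrm⟩ := Finset.mem_Icc.1 hr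
    split_ifs with hr' hrs hrs
    · linarith [hr' ▸ h₁]
    · linarith [hr' ▸ h₁]
    · linarith [h₂ r (by omega) hrs]
    · linarith [h₃ r (not_lt.1 hrs) hrm]
  have hsmall : ∑ r ∈ Finset.Icc 1 m, (if r < s then B else 0) ≤ s * B := by
    have hcard : ((Finset.Icc 1 m).filter (· < s)).card ≤ s :=
      (Finset.card_le_card fun r hr => Finset.mem_range.2 (Finset.mem_filter.1 hr).2).trans_eq
        (Finset.card_range s)
    rw [← Finset.sum_filter, Finset.sum_const, nsmul_eq_mul]
    gcongr
  have hone : ∑ r ∈ Finset.Icc 1 m, (if r = 1 then A else 0) ≤ A := by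
    rw [Finset.sum_ite_eq']
    split_ifs
    exacts [le_rfl, hA]
  calc ∑ r ∈ Finset.Icc 1 m, f r
      ≤ ∑ r ∈ Finset.Icc 1 m, ((if r = 1 then A else 0) + (if r < s then B else 0) + C) :=
        Finset.sum_le_sum hle
    _ = ∑ r ∈ Finset.Icc 1 m, (if r = 1 then A else 0) +
          ∑ r ∈ Finset.Icc 1 m, (if r < s then B else 0) + m * C := by
        rw [Finset.sum_add_distrib, Finset.sum_add_distrib, Finset.sum_const, Nat.card_Icc,
          Nat.add_sub_cancel, nsmul_eq_mul]
    _ ≤ A + s * B + m * C := by gcongr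

theorem sum_connectedSetBound_le (hn : 3000 ≤ n) (hn' : (n : ℝ) ^ 2 ≤ Real.exp (n / 3))
    (hq₀ : 0 ≤ q) (hq₁ : q ≤ 1) (hx : 1 ≤ n * q) (hnx : n ≤ Real.exp (n * q))
    (hexp : Real.exp 1 * (n * q) ≤ Real.exp (n * q / 80)) :
    ∑ r ∈ Finset.Icc 1 (n / 2),
        connectedSetBound n ℓ q (if r = 1 then (n * q)⁻¹ else 16⁻¹) (missBound q r) r ≤
      n * ((n * q) ^ ℓ * Real.exp (2 - n * q)) +
        300 * (16 ^ ℓ * ((36 * (n * q)) ^ 300 * Real.exp (-(2 / 5 * (n * q))))) +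
        16 ^ ℓ * (n : ℝ)⁻¹ := by
  have : (0 : ℝ) < n := by exact_mod_cast (by omega : 0 < n)
  have hhalf : ((n / 2 : ℕ) : ℝ) ≤ n := by exact_mod_cast Nat.div_le_self n 2
  have hlast : (n / 2 : ℕ) * (16 ^ ℓ * ((n : ℝ) ^ 2)⁻¹) ≤ 16 ^ ℓ * (n : ℝ)⁻¹ :=
    calc (n / 2 : ℕ) * (16 ^ ℓ * ((n : ℝ) ^ 2)⁻¹) ≤ n * (16 ^ ℓ * ((n : ℝ) ^ 2)⁻¹) := by gcongr
      _ = 16 ^ ℓ * (n : ℝ)⁻¹ := by field_simp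
  refine (sum_Icc_one_le_add (s := 300)
    (A := n * ((n * q) ^ ℓ * Real.exp (2 - n * q)))
    (B := 16 ^ ℓ * ((36 * (n * q)) ^ 300 * Real.exp (-(2 / 5 * (n * q)))))
    (by positivity) (by positivity) (by positivity) ?_ (fun r hr₂ hr => ?_)
    (fun r hr hrn => ?_)).trans (add_le_add (by norm_num) hlast)
  · rw [if_pos rfl]
    exact connectedSetBound_one_le hq₁ hx
  · rw [if_neg (by omega)]
    exact connectedSetBound_le_of_lt hn hr₂ hr hq₀ hq₁ hx hnx
  · rw [if_neg (by omega)]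
    exact connectedSetBound_le_of_ge hr (by omega) hq₀ hq₁ hx hnx hexp hn'

end ConnectedSetBound

/-- Upper bound for the probability that `𝔾_on(n, K, P, p)` has vertex connectivity at most
`ℓ`, in terms of the mean degree `x = n p_e`. The summands account for untypical key rings and
for components of `1`, of `2` to `299` and of at least `300` nodes that `ℓ` deletions cut off. -/
def vertexConnBound (n ℓ K : ℕ) (x : ℝ) : ℝ :=
  2 * Real.exp (-(K / 2)) +
    (n * (x ^ ℓ * Real.exp (2 - x)) +
      300 * (16 ^ ℓ * ((36 * x) ^ 300 * Real.exp (-(2 / 5 * x)))) +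
      16 ^ ℓ * (n : ℝ)⁻¹)

theorem gonMeasure_real_vertexConn_le_vertexConnBound {n ℓ K P : ℕ} {p : ℝ} (hp₀ : 0 ≤ p)
    (hp₁ : p ≤ 1) (hKP : K ≤ P) (hK : 40 * Real.exp 60 ≤ K) (hP : 301 * Real.exp 60 * K ≤ P)
    (hnP : (n : ℝ) ≤ Real.exp (K / 2) * P) (hℓ : ℓ < n) (hn : 3000 ≤ n)
    (hn' : (n : ℝ) ^ 2 ≤ Real.exp (n / 3)) (hx : 1 ≤ n * pef K P p)
    (hnx : n ≤ Real.exp (n * pef K P p))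
    (hexp : Real.exp 1 * (n * pef K P p) ≤ Real.exp (n * pef K P p / 80)) :
    (gonMeasure n K P p).real {ω | vertexConn (gonGraph ω) ≤ ℓ} ≤
      vertexConnBound n ℓ K (n * pef K P p) := by
  have hq₀ : 0 ≤ pef K P p := mul_nonneg hp₀ (psf_nonneg hKP)
  have hq₁ : pef K P p ≤ 1 := mul_le_one₀ hp₁ (psf_nonneg hKP) (psf_le_one K P)
  refine (gonMeasure_real_vertexConn_le hKP hp₀ hp₁ hℓ
    (θ := fun r => if r = 1 then (n * pef K P p)⁻¹ else 16⁻¹) (fun r => ?_) (fun r => ?_)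
    (missBound_nonneg hq₁)).trans
    (add_le_add (rkgMeasure_real_exists_missBound_lt_le hp₀ hp₁ hK hP hnP)
      (sum_connectedSetBound_le hn hn' hq₀ hq₁ hx hnx hexp))
  · split_ifs <;> positivity
  · split_ifs
    · exact inv_le_one_of_one_le₀ hx
    · norm_num

section Asymptotics

variable {ι : Type*} {f : Filter ι} {L x : ι → ℝ}

theorem eventually_le_of_tendsto_sub_mul_log (ℓ : ℕ) (hL : Tendsto L f atTop)
    (h : Tendsto (fun i => x i - L i - ℓ * Real.log (L i)) f atTop) : ∀ᶠ i in f, L i ≤ x i := by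
  filter_upwards [hL.eventually_ge_atTop 1, h.eventually_ge_atTop 0] with i hi h₀
  have : 0 ≤ ℓ * Real.log (L i) := mul_nonneg ℓ.cast_nonneg (Real.log_nonneg hi)
  linarith

theorem eventually_mul_log_le (C : ℝ) {ε : ℝ} (hε : 0 < ε) :
    ∀ᶠ y : ℝ in atTop, C * Real.log y ≤ ε * y := by
  filter_upwards [(Real.isLittleO_log_id_atTop.const_mul_left C).def hε,
    eventually_ge_atTop 0] with y hy hy₀
  rw [id, Real.norm_of_nonneg hy₀] at hy
  exact (Real.le_norm_self _).trans hy

theorem tendsto_sub_sub_mul_log_atTop (ℓ : ℕ) (hL : Tendsto L f atTop)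
    (h : Tendsto (fun i => x i - L i - ℓ * Real.log (L i)) f atTop) :
    Tendsto (fun i => x i - L i - ℓ * Real.log (x i)) f atTop := by
  have hLx := eventually_le_of_tendsto_sub_mul_log ℓ hL h
  have hx : Tendsto x f atTop := tendsto_atTop_mono' f hLx hL
  refine tendsto_atTop.2 fun M => ?_
  filter_upwards [hLx, hL.eventually_gt_atTop 0, hL.eventually_ge_atTop M,
    h.eventually_ge_atTop (M + ℓ * Real.log 3),
    hx.eventually (eventually_mul_log_le ℓ (by norm_num : (0 : ℝ) < 1 / 6))]
    with i hLx hL₀ hLM hM hlog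
  rcases le_or_gt (x i) (3 * L i) with h₃ | h₃
  · have : Real.log (x i) ≤ Real.log 3 + Real.log (L i) := by
      rw [← Real.log_mul (by norm_num) hL₀.ne']
      exact Real.log_le_log (hL₀.trans_le hLx) h₃
    linarith [mul_le_mul_of_nonneg_left this (ℓ.cast_nonneg : (0 : ℝ) ≤ ℓ)]
  · linarith

theorem tendsto_mul_pow_mul_exp_sub {x : ℕ → ℝ} (ℓ : ℕ) (C : ℝ) (hx : Tendsto x atTop atTop)
    (h : Tendsto (fun n : ℕ => x n - Real.log n - ℓ * Real.log (x n)) atTop atTop) :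
    Tendsto (fun n : ℕ => n * (x n ^ ℓ * Real.exp (C - x n))) atTop (nhds 0) := by
  have hexp := (Real.tendsto_exp_neg_atTop_nhds_zero.comp h).const_mul (Real.exp C)
  rw [mul_zero] at hexp
  refine hexp.congr' ?_
  filter_upwards [hx.eventually_gt_atTop 0, eventually_gt_atTop 0] with n hx₀ hn
  have hn' : (0 : ℝ) < n := Nat.cast_pos.2 hn
  calc Real.exp C * Real.exp (-(x n - Real.log n - ℓ * Real.log (x n)))
      = Real.exp (Real.log n + (ℓ * Real.log (x n) + (C - x n))) := by
        rw [← Real.exp_add]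
        ring_nf
    _ = n * (x n ^ ℓ * Real.exp (C - x n)) := by
        rw [Real.exp_add, Real.exp_add, Real.exp_nat_mul, Real.exp_log hn', Real.exp_log hx₀]

theorem tendsto_mul_pow_mul_exp_neg_mul (a : ℝ) (k : ℕ) {b : ℝ} (hb : 0 < b) :
    Tendsto (fun y : ℝ => (a * y) ^ k * Real.exp (-(b * y))) atTop (nhds 0) := by
  have h := (isLittleO_pow_exp_pos_mul_atTop k hb).tendsto_div_nhds_zero.const_mul (a ^ k)
  rw [mul_zero] at h
  refine h.congr fun y => ?_
  rw [mul_pow, Real.exp_neg, mul_assoc, div_eq_mul_inv]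

theorem eventually_mul_pow_le_exp (C : ℝ) (k : ℕ) {b : ℝ} (hb : 0 < b) :
    ∀ᶠ y : ℝ in atTop, C * y ^ k ≤ Real.exp (b * y) := by
  filter_upwards [((isLittleO_pow_exp_pos_mul_atTop k hb).const_mul_left C).def one_pos]
    with y hy
  rw [one_mul, Real.norm_of_nonneg (Real.exp_pos _).le] at hy
  exact (Real.le_norm_self _).trans hy

end Asymptotics

theorem mul_mul_pef_le_sq {n K P : ℕ} {p c : ℝ} (hK : K ≤ P) (hp₁ : p ≤ 1) (hc : 0 ≤ c)
    (hP : c * n ≤ P) : c * (n * pef K P p) ≤ (K : ℝ) ^ 2 :=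
  calc c * (n * pef K P p) ≤ c * (n * (K ^ 2 / P)) := by
        gcongr
        exact (mul_le_of_le_one_left (psf_nonneg hK) hp₁).trans (psf_le_sq_div hK)
    _ = c * n / P * K ^ 2 := by ring
    _ ≤ (K : ℝ) ^ 2 :=
        mul_le_of_le_one_left (sq_nonneg _) (div_le_one_of_le₀ hP (Nat.cast_nonneg P))

section Growth

variable {K P : ℕ → ℕ} {p : ℕ → ℝ} {c : ℝ}

theorem tendsto_card_keyRing_atTop (hKP : ∀ n, K n ≤ P n) (hp₁ : ∀ n, p n ≤ 1) (hc : 0 < c)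
    (hP : ∀ᶠ n : ℕ in atTop, c * n ≤ P n)
    (hx : Tendsto (fun n : ℕ => n * pef (K n) (P n) (p n)) atTop atTop) :
    Tendsto (fun n => (K n : ℝ)) atTop atTop := by
  refine tendsto_atTop_mono' atTop ?_
    (Real.tendsto_sqrt_atTop.comp (hx.const_mul_atTop hc))
  filter_upwards [hP] with n hn
  exact Real.sqrt_le_iff.2 ⟨Nat.cast_nonneg _, mul_mul_pef_le_sq (hKP n) (hp₁ n) hc.le hn⟩

theorem eventually_natCast_le_exp_mul (hc : 0 < c) (hP : ∀ᶠ n : ℕ in atTop, c * n ≤ P n)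
    (hK : Tendsto (fun n => (K n : ℝ)) atTop atTop) :
    ∀ᶠ n : ℕ in atTop, (n : ℝ) ≤ Real.exp (K n / 2) * P n := by
  have hexp := Real.tendsto_exp_atTop.comp (hK.atTop_div_const two_pos)
  filter_upwards [hP, hexp.eventually_ge_atTop c⁻¹] with n hn hexp
  calc (n : ℝ) = c⁻¹ * (c * n) := by field_simp
    _ ≤ Real.exp (K n / 2) * P n := by gcongr; exact hexp

theorem eventually_mul_le_of_tendsto_div (hK : Tendsto (fun n => (K n : ℝ)) atTop atTop)
    (hKP : ∀ n, K n ≤ P n) (h : Tendsto (fun n => (K n : ℝ) / P n) atTop (nhds 0)) {C : ℝ}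
    (hC : 0 < C) : ∀ᶠ n in atTop, C * K n ≤ P n := by
  filter_upwards [h.eventually_le_const (inv_pos.2 hC), hK.eventually_gt_atTop 0] with n hn hK₀
  have hP₀ : (0 : ℝ) < P n := hK₀.trans_le (Nat.cast_le.2 (hKP n))
  rwa [div_le_iff₀ hP₀, ← div_eq_inv_mul, le_div_iff₀' hC] at hn

theorem eventually_gonMeasure_real_vertexConn_le (ℓ : ℕ) (hKP : ∀ n, K n ≤ P n)
    (hp₀ : ∀ n, 0 ≤ p n) (hp₁ : ∀ n, p n ≤ 1) (hc : 0 < c)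
    (hP : ∀ᶠ n : ℕ in atTop, c * n ≤ P n)
    (hKPo : Tendsto (fun n => (K n : ℝ) / P n) atTop (nhds 0))
    (hlogx : ∀ᶠ n : ℕ in atTop, Real.log n ≤ n * pef (K n) (P n) (p n)) :
    ∀ᶠ n : ℕ in atTop,
      (gonMeasure n (K n) (P n) (p n)).real {ω | vertexConn (gonGraph ω) ≤ ℓ} ≤
        vertexConnBound n ℓ (K n) (n * pef (K n) (P n) (p n)) := by
  have hx := tendsto_atTop_mono' atTop hlogx
    (Real.tendsto_log_atTop.comp tendsto_natCast_atTop_atTop)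
  have hK := tendsto_card_keyRing_atTop hKP hp₁ hc hP hx
  filter_upwards [hlogx, hK.eventually_ge_atTop (40 * Real.exp 60),
    eventually_mul_le_of_tendsto_div hK hKP hKPo (by positivity : 0 < 301 * Real.exp 60),
    eventually_natCast_le_exp_mul hc hP hK, eventually_gt_atTop ℓ, eventually_ge_atTop 3000,
    tendsto_natCast_atTop_atTop.eventually
      (eventually_mul_pow_le_exp 1 2 (by norm_num : (0 : ℝ) < 1 / 3)),
    hx.eventually_ge_atTop 1,
    hx.eventually (eventually_mul_pow_le_exp (Real.exp 1) 1 (by norm_num : (0 : ℝ) < 1 / 80))]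
    with n hlogx hK hPK hnP hℓ hn hn' hx₁ hexp
  exact gonMeasure_real_vertexConn_le_vertexConnBound (hp₀ n) (hp₁ n) (hKP n) hK hPK hnP hℓ hn
    (by convert hn' using 2 <;> ring) hx₁
    ((Real.log_le_iff_le_exp (by positivity)).1 hlogx) (by convert hexp using 2 <;> ring)

end Growth

theorem tendsto_vertexConnBound (ℓ : ℕ) {K : ℕ → ℕ} {x : ℕ → ℝ}
    (hK : Tendsto (fun n => (K n : ℝ)) atTop atTop) (hx : Tendsto x atTop atTop)
    (h : Tendsto (fun n : ℕ => x n - Real.log n - ℓ * Real.log (x n)) atTop atTop) :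
    Tendsto (fun n => vertexConnBound n ℓ (K n) (x n)) atTop (nhds 0) := by
  have hrings : Tendsto (fun n => Real.exp (-((K n : ℝ) / 2))) atTop (nhds 0) :=
    Real.tendsto_exp_neg_atTop_nhds_zero.comp (hK.atTop_div_const two_pos)
  have hsmall := (tendsto_mul_pow_mul_exp_neg_mul 36 300 (by norm_num : (0 : ℝ) < 2 / 5)).comp hx
  have hinv : Tendsto (fun n : ℕ => (n : ℝ)⁻¹) atTop (nhds 0) :=
    tendsto_inv_atTop_nhds_zero_nat
  simpa only [vertexConnBound, mul_zero, add_zero, Function.comp_def] using (hrings.const_mul 2).add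
    (((tendsto_mul_pow_mul_exp_sub ℓ 2 hx h).add ((hsmall.const_mul (16 ^ ℓ)).const_mul 300)).add
      (hinv.const_mul (16 ^ ℓ)))

theorem gon_connectivity_ne_ell_general
    (ℓ : ℕ) (K P : ℕ → ℕ) (p : ℕ → ℝ)
    (hKP : ∀ n, K n ≤ P n) (hp0 : ∀ n, 0 ≤ p n) (hp1 : ∀ n, p n ≤ 1)
    (hP : ∃ c : ℝ, 0 < c ∧ ∀ᶠ n : ℕ in atTop, c * (n : ℝ) ≤ (P n : ℝ))
    (hKPo : Tendsto (fun n : ℕ => (K n : ℝ) / (P n : ℝ)) atTop (nhds 0))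
    (β : ℕ → ℝ)
    (hβ : ∀ n : ℕ, β n =
      (n : ℝ) * pef (K n) (P n) (p n) - Real.log n - (ℓ : ℝ) * Real.log (Real.log n))
    (hβtop : Tendsto β atTop atTop) :
    Tendsto (fun n : ℕ => gonMeasure n (K n) (P n) (p n)
        {ω | vertexConn (gonGraph ω) ≤ ℓ}) atTop (nhds 0) := by
  obtain ⟨c, hc, hP⟩ := hP
  rw [funext hβ] at hβtop
  have hlog : Tendsto (fun n : ℕ => Real.log n) atTop atTop :=
    Real.tendsto_log_atTop.comp tendsto_natCast_atTop_atTop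
  have hlogx := eventually_le_of_tendsto_sub_mul_log ℓ hlog hβtop
  have hx := tendsto_atTop_mono' atTop hlogx hlog
  have hK := tendsto_card_keyRing_atTop hKP hp1 hc hP hx
  have hfin : ∀ n, gonMeasure n (K n) (P n) (p n) {ω | vertexConn (gonGraph ω) ≤ ℓ} ≠ ∞ :=
    fun n => have := isProbabilityMeasure_gonMeasure (n := n) (hKP n) (hp0 n) (hp1 n)
      measure_ne_top _ _
  exact (ENNReal.tendsto_toReal_iff hfin ENNReal.zero_ne_top).1 <|
    squeeze_zero' (.of_forall fun _ => ENNReal.toReal_nonneg)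
      (eventually_gonMeasure_real_vertexConn_le ℓ hKP hp0 hp1 hc hP hKPo hlogx)
      (tendsto_vertexConnBound ℓ hK hx (tendsto_sub_sub_mul_log_atTop ℓ hlog hβtop))

/-- the vertex connectivity of `𝔾_on` is not `ℓ`,
asymptotically. -/
theorem gon_connectivity_ne_ell
    (ℓ : ℕ) (K P : ℕ → ℕ) (p : ℕ → ℝ)
    (hKP : ∀ n, K n ≤ P n) (hp0 : ∀ n, 0 < p n) (hp1 : ∀ n, p n < 1)
    (hK2 : ∀ᶠ n : ℕ in atTop, 2 ≤ K n)
    (hP : ∃ c : ℝ, 0 < c ∧ ∀ᶠ n : ℕ in atTop, c * (n : ℝ) ≤ (P n : ℝ))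
    (hKPo : Tendsto (fun n : ℕ => (K n : ℝ) / (P n : ℝ)) atTop (nhds 0))
    (β : ℕ → ℝ)
    (hβ : ∀ n : ℕ, β n =
      (n : ℝ) * pef (K n) (P n) (p n) - Real.log n - (ℓ : ℝ) * Real.log (Real.log n))
    (hβo : Tendsto (fun n : ℕ => β n / Real.log n) atTop (nhds 0))
    (hβtop : Tendsto β atTop atTop) :
    Tendsto (fun n : ℕ => gonMeasure n (K n) (P n) (p n)
        {ω | vertexConn (gonGraph ω) = ℓ}) atTop (nhds 0) :=
  tendsto_of_tendsto_of_tendsto_of_le_of_le tendsto_const_nhds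
    (gon_connectivity_ne_ell_general ℓ K P p hKP (fun n => (hp0 n).le) (fun n => (hp1 n).le) hP
      hKPo β hβ hβtop)
    (fun _ => zero_le) fun _ => measure_mono fun _ => le_of_eq
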